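/- arXiv:q-alg/9412003 — 3 statements merged into one kernel-verified Lean document; each statement's English description precedes it below -/
import Mathlib

section
/- In a braided quantum group, the pentagonal relations (id⊗φ)σ = (τ⊗id)(id⊗σ)(φ⊗id), (φ⊗id)σ = (id⊗σ)(τ⊗id)(id⊗φ), and (id⊗φ)σ = (σ⊗id)(id⊗τ)(φ⊗id) hold, where τ is the secondary braiding. -/
open TensorProduct LinearMap

noncomputable section

variable (A : Type*) [Ring A] [Algebra ℂ A]

/-- Two-fold tensor product of `A` with itself. -/
abbrev T2 := A ⊗[ℂ] A
/-- Three-fold tensor product (right associated). -/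
abbrev T3 := A ⊗[ℂ] (A ⊗[ℂ] A)
/-- Four-fold tensor product (right associated). -/
abbrev T4 := A ⊗[ℂ] (A ⊗[ℂ] (A ⊗[ℂ] A))

variable {A}

/-- The multiplication of `A` as a linear map. -/
def mA : T2 A →ₗ[ℂ] A := LinearMap.mul' ℂ A

/-- `f ⊗ id` : a map of `T2` acting on the factors 1,2 of `T3`. -/
def op12 (f : T2 A →ₗ[ℂ] T2 A) : T3 A →ₗ[ℂ] T3 A :=
  (TensorProduct.assoc ℂ A A A).toLinearMap ∘ₗ f.rTensor A ∘ₗ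
    (TensorProduct.assoc ℂ A A A).symm.toLinearMap

/-- `id ⊗ f` : a map of `T2` acting on the factors 2,3 of `T3`. -/
def op23 (f : T2 A →ₗ[ℂ] T2 A) : T3 A →ₗ[ℂ] T3 A := f.lTensor A

/-- `f ⊗ id ⊗ id` : a map of `T2` acting on the factors 1,2 of `T4`. -/
def op12_4 (f : T2 A →ₗ[ℂ] T2 A) : T4 A →ₗ[ℂ] T4 A :=
  (TensorProduct.assoc ℂ A A (T2 A)).toLinearMap ∘ₗ f.rTensor (T2 A) ∘ₗ
    (TensorProduct.assoc ℂ A A (T2 A)).symm.toLinearMap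

/-- `id ⊗ f ⊗ id` : a map of `T2` acting on the factors 2,3 of `T4`. -/
def op23_4 (f : T2 A →ₗ[ℂ] T2 A) : T4 A →ₗ[ℂ] T4 A := (op12 f).lTensor A

/-- `id ⊗ id ⊗ f` : a map of `T2` acting on the factors 3,4 of `T4`. -/
def op34_4 (f : T2 A →ₗ[ℂ] T2 A) : T4 A →ₗ[ℂ] T4 A := (f.lTensor A).lTensor A

/-- `m ⊗ id : T3 → T2`. -/
def m12 : T3 A →ₗ[ℂ] T2 A :=
  (mA (A := A)).rTensor A ∘ₗ (TensorProduct.assoc ℂ A A A).symm.toLinearMap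

/-- `id ⊗ m : T3 → T2`. -/
def m23 : T3 A →ₗ[ℂ] T2 A := (mA (A := A)).lTensor A

/-- `m ⊗ m : T4 → T2`. -/
def mm : T4 A →ₗ[ℂ] T2 A := m12 ∘ₗ ((mA (A := A)).lTensor A).lTensor A

/-- A braided quantum group structure on the algebra `A` (Đurđević).
`φ` is the coproduct, `ε` the counit, `κ` the antipode, `σ` the braiding
(with given inverse `σ'`). -/
structure BQG (A : Type*) [Ring A] [Algebra ℂ A] where
  φ : A →ₗ[ℂ] T2 A
  ε : A →ₗ[ℂ] ℂ
  κ : A →ₗ[ℂ] A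
  σ : T2 A →ₗ[ℂ] T2 A
  σ' : T2 A →ₗ[ℂ] T2 A
  σ_comp : σ ∘ₗ σ' = LinearMap.id
  comp_σ : σ' ∘ₗ σ = LinearMap.id
  κ_bij : Function.Bijective κ
  /-- coassociativity `(φ⊗id)φ = (id⊗φ)φ` -/
  coassoc : (TensorProduct.assoc ℂ A A A).toLinearMap ∘ₗ φ.rTensor A ∘ₗ φ = φ.lTensor A ∘ₗ φ
  /-- `(ε⊗id)φ = id` -/
  counit_left : (TensorProduct.lid ℂ A).toLinearMap ∘ₗ ε.rTensor A ∘ₗ φ = LinearMap.id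
  /-- `(id⊗ε)φ = id` -/
  counit_right : (TensorProduct.rid ℂ A).toLinearMap ∘ₗ ε.lTensor A ∘ₗ φ = LinearMap.id
  /-- `σ(m⊗id) = (id⊗m)(σ⊗id)(id⊗σ)` -/
  braid_mul_left : σ ∘ₗ m12 = m23 ∘ₗ op12 σ ∘ₗ op23 σ
  /-- `σ(id⊗m) = (m⊗id)(id⊗σ)(σ⊗id)` -/
  braid_mul_right : σ ∘ₗ m23 = m12 ∘ₗ op23 σ ∘ₗ op12 σ
  /-- `φm = (m⊗m)(id⊗σ⊗id)(φ⊗φ)` -/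
  comul_mul : φ ∘ₗ mA = mm ∘ₗ op23_4 σ ∘ₗ
      (TensorProduct.assoc ℂ A A (T2 A)).toLinearMap ∘ₗ φ.rTensor (T2 A) ∘ₗ φ.lTensor A
  /-- `(σ⊗id²)(id⊗φ⊗id)(σ⁻¹⊗id)(id⊗φ) = (id²⊗σ)(id⊗φ⊗id)(id⊗σ⁻¹)(φ⊗id)` -/
  mixed_coassoc :
    op12_4 σ ∘ₗ ((TensorProduct.assoc ℂ A A A).toLinearMap ∘ₗ φ.rTensor A).lTensor A ∘ₗ
        op12 σ' ∘ₗ φ.lTensor A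
      = op34_4 σ ∘ₗ ((TensorProduct.assoc ℂ A A A).toLinearMap ∘ₗ φ.rTensor A).lTensor A ∘ₗ
        op23 σ' ∘ₗ (TensorProduct.assoc ℂ A A A).toLinearMap ∘ₗ φ.rTensor A
  /-- `m(κ⊗id)φ = 1ε` -/
  antipode_left : mA ∘ₗ κ.rTensor A ∘ₗ φ = Algebra.linearMap ℂ A ∘ₗ ε
  /-- `m(id⊗κ)φ = 1ε` -/
  antipode_right : mA ∘ₗ κ.lTensor A ∘ₗ φ = Algebra.linearMap ℂ A ∘ₗ ε

namespace BQG

variable {A : Type*} [Ring A] [Algebra ℂ A] (G : BQG A)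

/-- `φ ⊗ id : T2 → T3`. -/
def φ1 : T2 A →ₗ[ℂ] T3 A := (TensorProduct.assoc ℂ A A A).toLinearMap ∘ₗ G.φ.rTensor A

/-- `id ⊗ φ : T2 → T3`. -/
def φ2 : T2 A →ₗ[ℂ] T3 A := G.φ.lTensor A

/-- `id² ⊗ ε : T3 → T2`. -/
def ε3r : T3 A →ₗ[ℂ] T2 A :=
  ((TensorProduct.rid ℂ A).toLinearMap ∘ₗ G.ε.lTensor A).lTensor A

/-- `ε ⊗ id² : T3 → T2`. -/
def ε3l : T3 A →ₗ[ℂ] T2 A :=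
  (TensorProduct.lid ℂ (T2 A)).toLinearMap ∘ₗ G.ε.rTensor (T2 A)

/-- The secondary braiding `τ = (id²⊗ε)(id⊗σ⁻¹)(φ⊗id)σ`. -/
def τ : T2 A →ₗ[ℂ] T2 A := G.ε3r ∘ₗ op23 G.σ' ∘ₗ G.φ1 ∘ₗ G.σ

/-- `ε ⊗ ε : T2 → ℂ`. -/
def εε : T2 A →ₗ[ℂ] ℂ :=
  (TensorProduct.lid ℂ ℂ).toLinearMap ∘ₗ G.ε.rTensor ℂ ∘ₗ G.ε.lTensor A

end BQG

/-!
Put `α = τσ⁻¹` and write subscripts for the tensor factors acted on. Applying `ε` to one factor of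
`φm = (m ⊗ m)σ₂₃(φ ⊗ φ)` and cancelling with the antipode gives two contractions of `σ`; with them
the mixed coassociativity relation shows that both formulas for `α` agree. Hence `α` commutes with
`φ`, with `σ₂₃⁻¹φ₁` and with `σ₁₂⁻¹φ₂`. A further cancellation of the antipode yields
`ακ₁α = κ₁`, so that `α` is invertible, and `φ₁σ⁻¹α = σ₂₃⁻¹σ₁₂⁻¹φ₂`. Substituting this into the
inverse mixed relation `σ₃₄⁻¹φ₂σ₁₂⁻¹φ₂ = σ₁₂⁻¹φ₂σ₂₃⁻¹φ₁` produces the mirror identity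
`φ₂σ⁻¹α = σ₁₂⁻¹σ₂₃⁻¹φ₁`. The pentagons are these two identities after moving `α` past `φ`,
`σ₁₂⁻¹φ₂` or `σ₂₃⁻¹φ₁`. All operators act on the first factors of `A ⊗ X` with `X` arbitrary, so
that acting on later factors is `lTensor` of the same operator.
-/

namespace BQG

local prefix:max "◁" => LinearMap.lTensor _

section Tails

variable {R M X Y Z W V : Type*} [CommSemiring R] [AddCommMonoid M] [Module R M]
  [AddCommMonoid X] [Module R X] [AddCommMonoid Y] [Module R Y] [AddCommMonoid Z] [Module R Z]
  [AddCommMonoid W] [Module R W] [AddCommMonoid V] [Module R V]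

lemma lTensor_comm {f : Y →ₗ[R] Z} {g : X →ₗ[R] Y} {f' : W →ₗ[R] Z} {g' : X →ₗ[R] W}
    (h : ∀ x, f (g x) = f' (g' x)) (x : M ⊗[R] X) : ◁f (◁g x) = ◁f' (◁g' x) := by
  rw [← lTensor_comp_apply, ← lTensor_comp_apply, show f ∘ₗ g = f' ∘ₗ g' from LinearMap.ext h]

lemma lTensor_comp_eq {f : Y →ₗ[R] Z} {g : X →ₗ[R] Y} {k : X →ₗ[R] Z}
    (h : ∀ x, f (g x) = k x) (x : M ⊗[R] X) : ◁f (◁g x) = ◁k x := by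
  rw [← lTensor_comp_apply, show f ∘ₗ g = k from LinearMap.ext h]

lemma lTensor_comm₃ {f : Z →ₗ[R] W} {f₁ : Y →ₗ[R] Z} {g : X →ₗ[R] Y} {f' : V →ₗ[R] W}
    {g' : X →ₗ[R] V} (h : ∀ x, f (f₁ (g x)) = f' (g' x)) (x : M ⊗[R] X) :
    ◁f (◁f₁ (◁g x)) = ◁f' (◁g' x) := by
  rw [← lTensor_comp_apply _ f₁]
  exact lTensor_comm (g := f₁ ∘ₗ g) h x

lemma lTensor_cancel {f : Y →ₗ[R] X} {g : X →ₗ[R] Y} (h : ∀ x, f (g x) = x) (x : M ⊗[R] X) :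
    ◁f (◁g x) = x := by
  rw [lTensor_comp_eq (k := LinearMap.id) h, lTensor_id_apply]

/-- Insertion of a tail: `a ↦ a ⊗ t`. -/
def tail (t : X) : M →ₗ[R] M ⊗[R] X := (TensorProduct.mk R M X).flip t

lemma lTensor_tail (g : X →ₗ[R] Y) (t : X) (a : M) : ◁g (tail t a) = tail (g t) a := rfl

lemma lTensor_lTensor_tail (g : X →ₗ[R] Y) (t : X) (z : M ⊗[R] M) :
    ◁(◁g) (◁(tail t) z) = ◁(tail (g t)) z :=
  lTensor_comp_eq (lTensor_tail g t) z

lemma assoc_tmul_tail (t : X) (z : M ⊗[R] M) :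
    TensorProduct.assoc R M M X (z ⊗ₜ[R] t) = ◁(tail t) z := by
  induction z using TensorProduct.induction_on with
  | zero => simp
  | tmul a b => rfl
  | add x y hx hy => rw [TensorProduct.add_tmul, map_add, map_add, hx, hy]

lemma assoc_symm_tail (t : X) (z : M ⊗[R] M) :
    (TensorProduct.assoc R M M X).symm (◁(tail t) z) = z ⊗ₜ[R] t := by
  rw [← assoc_tmul_tail, LinearEquiv.symm_apply_apply]

lemma tail_ext₁ {f g : M ⊗[R] X →ₗ[R] Y} (h : ∀ t a, f (tail t a) = g (tail t a)) : f = g :=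
  TensorProduct.ext' fun a t => h t a

lemma tail_ext₂ {f g : M ⊗[R] (M ⊗[R] X) →ₗ[R] Y}
    (h : ∀ t z, f (◁(tail t) z) = g (◁(tail t) z)) : f = g :=
  TensorProduct.ext_threefold' fun a b t => h t (a ⊗ₜ b)

lemma tail_ext₃ {f g : M ⊗[R] (M ⊗[R] (M ⊗[R] X)) →ₗ[R] Y}
    (h : ∀ t z, f (◁(◁(tail t)) z) = g (◁(◁(tail t)) z)) : f = g :=
  TensorProduct.ext (LinearMap.ext fun a => tail_ext₂ fun t z => h t (a ⊗ₜ z))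

end Tails

section HeadOperators

variable {A : Type*} [Ring A] [Algebra ℂ A] (G : BQG A)
variable {X Y : Type*} [AddCommMonoid X] [Module ℂ X] [AddCommMonoid Y] [Module ℂ Y]

/-- `f ⊗ id_X` on `A ⊗ (A ⊗ X)`. The operators `op12 f` and `op12_4 f` are the cases `X = A` and
`X = T2 A`. -/
def opₕ (f : T2 A →ₗ[ℂ] T2 A) : A ⊗[ℂ] (A ⊗[ℂ] X) →ₗ[ℂ] A ⊗[ℂ] (A ⊗[ℂ] X) :=
  (TensorProduct.assoc ℂ A A X).toLinearMap ∘ₗ f.rTensor X ∘ₗ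
    (TensorProduct.assoc ℂ A A X).symm.toLinearMap

/-- The braiding `σ ⊗ id_X` of the first two factors. -/
abbrev σₕ : A ⊗[ℂ] (A ⊗[ℂ] X) →ₗ[ℂ] A ⊗[ℂ] (A ⊗[ℂ] X) := opₕ G.σ

/-- The inverse braiding `σ⁻¹ ⊗ id_X` of the first two factors. -/
abbrev σₕ' : A ⊗[ℂ] (A ⊗[ℂ] X) →ₗ[ℂ] A ⊗[ℂ] (A ⊗[ℂ] X) := opₕ G.σ'

/-- The coproduct `φ ⊗ id_X` of the first factor. -/
def φₕ : A ⊗[ℂ] X →ₗ[ℂ] A ⊗[ℂ] (A ⊗[ℂ] X) :=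
  (TensorProduct.assoc ℂ A A X).toLinearMap ∘ₗ G.φ.rTensor X

/-- The counit `ε ⊗ id_X` on the first factor. -/
def εₕ : A ⊗[ℂ] X →ₗ[ℂ] X := (TensorProduct.lid ℂ X).toLinearMap ∘ₗ G.ε.rTensor X

/-- The antipode `κ ⊗ id_X` on the first factor. -/
def κₕ : A ⊗[ℂ] X →ₗ[ℂ] A ⊗[ℂ] X := G.κ.rTensor X

/-- The product `m ⊗ id_X` of the first two factors. -/
def mₕ : A ⊗[ℂ] (A ⊗[ℂ] X) →ₗ[ℂ] A ⊗[ℂ] X :=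
  (mA (A := A)).rTensor X ∘ₗ (TensorProduct.assoc ℂ A A X).symm.toLinearMap

/-- Insertion of the unit of `A` as a new first factor. -/
def ηₕ : X →ₗ[ℂ] A ⊗[ℂ] X := TensorProduct.mk ℂ A X 1

lemma φₕ_tail (t : X) (a : A) : G.φₕ (tail t a) = ◁(tail t) (G.φ a) :=
  assoc_tmul_tail t (G.φ a)

lemma εₕ_tail (t : X) (a : A) : G.εₕ (tail t a) = G.ε a • t := by
  simp [εₕ, tail]

lemma κₕ_tail (t : X) (a : A) : G.κₕ (tail t a) = tail t (G.κ a) := rfl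

lemma opₕ_tail (f : T2 A →ₗ[ℂ] T2 A) (t : X) (z : T2 A) :
    opₕ f (◁(tail t) z) = ◁(tail t) (f z) := by
  simp only [opₕ, LinearMap.comp_apply, LinearEquiv.coe_coe, assoc_symm_tail,
    rTensor_tmul, assoc_tmul_tail]

lemma mₕ_tail (t : X) (z : T2 A) : mₕ (◁(tail t) z) = tail t (mA z) := by
  simp only [mₕ, LinearMap.comp_apply, LinearEquiv.coe_coe, assoc_symm_tail, rTensor_tmul]
  rfl

lemma ηₕ_smul (c : ℂ) (t : X) : ηₕ (c • t) = tail t (algebraMap ℂ A c) := by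
  simp [ηₕ, tail, Algebra.algebraMap_eq_smul_one]

lemma lTensor_εₕ_tail (t : X) (z : T2 A) :
    ◁G.εₕ (◁(tail t) z) = tail t (TensorProduct.rid ℂ A (◁G.ε z)) := by
  induction z using TensorProduct.induction_on with
  | zero => simp
  | tmul a b => simp [εₕ, tail]
  | add x y hx hy => simp only [map_add, hx, hy]

lemma φₕ_lTensor (g : X →ₗ[ℂ] Y) (x : A ⊗[ℂ] X) : G.φₕ (◁g x) = ◁(◁g) (G.φₕ x) :=
  LinearMap.congr_fun (f := G.φₕ ∘ₗ ◁g) (g := ◁(◁g) ∘ₗ G.φₕ)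
    (tail_ext₁ fun t a => by
      simp only [LinearMap.comp_apply, lTensor_tail, φₕ_tail, lTensor_lTensor_tail]) x

lemma εₕ_lTensor (g : X →ₗ[ℂ] Y) (x : A ⊗[ℂ] X) : G.εₕ (◁g x) = g (G.εₕ x) :=
  LinearMap.congr_fun (f := G.εₕ ∘ₗ ◁g) (g := g ∘ₗ G.εₕ)
    (tail_ext₁ fun t a => by
      simp only [LinearMap.comp_apply, lTensor_tail, εₕ_tail, map_smul]) x

lemma κₕ_lTensor (g : X →ₗ[ℂ] Y) (x : A ⊗[ℂ] X) : G.κₕ (◁g x) = ◁g (G.κₕ x) := by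
  simp only [κₕ, ← LinearMap.comp_apply, rTensor_comp_lTensor, lTensor_comp_rTensor]

lemma opₕ_lTensor (f : T2 A →ₗ[ℂ] T2 A) (g : X →ₗ[ℂ] Y) (x : A ⊗[ℂ] (A ⊗[ℂ] X)) :
    opₕ f (◁(◁g) x) = ◁(◁g) (opₕ f x) :=
  LinearMap.congr_fun (f := opₕ f ∘ₗ ◁(◁g)) (g := ◁(◁g) ∘ₗ opₕ f)
    (tail_ext₂ fun t z => by
      simp only [LinearMap.comp_apply, lTensor_lTensor_tail, opₕ_tail]) x

lemma mₕ_lTensor (g : X →ₗ[ℂ] Y) (x : A ⊗[ℂ] (A ⊗[ℂ] X)) : mₕ (◁(◁g) x) = ◁g (mₕ x) :=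
  LinearMap.congr_fun (f := mₕ ∘ₗ ◁(◁g)) (g := ◁g ∘ₗ mₕ)
    (tail_ext₂ fun t z => by
      simp only [LinearMap.comp_apply, lTensor_lTensor_tail, mₕ_tail, lTensor_tail]) x

lemma ηₕ_apply (g : X →ₗ[ℂ] Y) (x : X) : (ηₕ (g x) : A ⊗[ℂ] Y) = ◁g (ηₕ x) := rfl

lemma opₕ_comp (f g : T2 A →ₗ[ℂ] T2 A) (x : A ⊗[ℂ] (A ⊗[ℂ] X)) :
    opₕ (f ∘ₗ g) x = opₕ f (opₕ g x) := by
  simp [opₕ, rTensor_comp]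

lemma opₕ_id (x : A ⊗[ℂ] (A ⊗[ℂ] X)) : opₕ LinearMap.id x = x := by
  simp [opₕ]

lemma σₕ_σₕ' (x : A ⊗[ℂ] (A ⊗[ℂ] X)) : G.σₕ (G.σₕ' x) = x := by
  rw [← opₕ_comp, G.σ_comp, opₕ_id]

lemma σₕ'_σₕ (x : A ⊗[ℂ] (A ⊗[ℂ] X)) : G.σₕ' (G.σₕ x) = x := by
  rw [← opₕ_comp, G.comp_σ, opₕ_id]

lemma κₕ_bijective : Function.Bijective (G.κₕ : A ⊗[ℂ] X →ₗ[ℂ] A ⊗[ℂ] X) :=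
  ((LinearEquiv.ofBijective G.κ G.κ_bij).rTensor X).bijective

lemma φₕ_φₕ (x : A ⊗[ℂ] X) : G.φₕ (G.φₕ x) = ◁G.φₕ (G.φₕ x) :=
  LinearMap.congr_fun (f := G.φₕ ∘ₗ G.φₕ) (g := ◁G.φₕ ∘ₗ G.φₕ)
    (tail_ext₁ fun t a => by
      simp only [LinearMap.comp_apply, φₕ_tail, φₕ_lTensor]
      rw [lTensor_comm (G.φₕ_tail t)]
      exact congrArg _ (LinearMap.congr_fun G.coassoc a)) x

lemma εₕ_φₕ (x : A ⊗[ℂ] X) : G.εₕ (G.φₕ x) = x :=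
  LinearMap.congr_fun (f := G.εₕ ∘ₗ G.φₕ) (g := LinearMap.id)
    (tail_ext₁ fun t a => by
      simp only [LinearMap.comp_apply, φₕ_tail, εₕ_lTensor]
      exact congrArg _ (LinearMap.congr_fun G.counit_left a)) x

lemma lTensor_εₕ_φₕ (x : A ⊗[ℂ] X) : ◁G.εₕ (G.φₕ x) = x :=
  LinearMap.congr_fun (f := ◁G.εₕ ∘ₗ G.φₕ) (g := LinearMap.id)
    (tail_ext₁ fun t a => by
      simp only [LinearMap.comp_apply, φₕ_tail, lTensor_εₕ_tail]
      exact congrArg _ (LinearMap.congr_fun G.counit_right a)) x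

lemma mₕ_ηₕ (x : A ⊗[ℂ] X) : mₕ (ηₕ x) = x :=
  LinearMap.congr_fun (f := mₕ ∘ₗ ηₕ) (g := LinearMap.id)
    (tail_ext₁ fun t a => by simp [mₕ, ηₕ, tail, mA]) x

lemma mₕ_lTensor_ηₕ (x : A ⊗[ℂ] X) : mₕ (◁ηₕ x) = x :=
  LinearMap.congr_fun (f := mₕ ∘ₗ ◁ηₕ) (g := LinearMap.id)
    (tail_ext₁ fun t a => by simp [mₕ, ηₕ, tail, mA]) x

lemma mₕ_lTensor_mₕ (x : A ⊗[ℂ] (A ⊗[ℂ] (A ⊗[ℂ] X))) : mₕ (◁mₕ x) = mₕ (mₕ x) := by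
  have mul_assoc' : mA ∘ₗ ◁mA = mA ∘ₗ (mₕ : T3 A →ₗ[ℂ] T2 A) :=
    TensorProduct.ext_threefold' fun a b c => by simp [mₕ, mA, mul_assoc]
  exact LinearMap.congr_fun (f := mₕ ∘ₗ ◁mₕ) (g := mₕ ∘ₗ mₕ)
    (tail_ext₃ fun t z => by
      simp only [LinearMap.comp_apply, mₕ_lTensor]
      rw [lTensor_comm (mₕ_tail t), mₕ_tail, mₕ_tail]
      exact congrArg _ (LinearMap.congr_fun mul_assoc' z)) x

lemma σₕ_lTensor_mₕ (x : A ⊗[ℂ] (A ⊗[ℂ] (A ⊗[ℂ] X))) :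
    G.σₕ (◁mₕ x) = mₕ (◁G.σₕ (G.σₕ x)) :=
  LinearMap.congr_fun (f := G.σₕ ∘ₗ ◁mₕ) (g := mₕ ∘ₗ ◁G.σₕ ∘ₗ G.σₕ)
    (tail_ext₃ fun t z => by
      simp only [LinearMap.comp_apply, opₕ_lTensor]
      rw [lTensor_comm (opₕ_tail G.σ t), mₕ_lTensor, lTensor_comm (mₕ_tail t), opₕ_tail]
      exact congrArg _ (LinearMap.congr_fun G.braid_mul_right z)) x

lemma φₕ_mₕ (x : A ⊗[ℂ] (A ⊗[ℂ] X)) :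
    G.φₕ (mₕ x) = mₕ (◁(◁mₕ) (◁G.σₕ (G.φₕ (◁G.φₕ x)))) :=
  LinearMap.congr_fun (f := G.φₕ ∘ₗ mₕ) (g := mₕ ∘ₗ ◁(◁mₕ) ∘ₗ ◁G.σₕ ∘ₗ G.φₕ ∘ₗ ◁G.φₕ)
    (tail_ext₂ fun t z => by
      simp only [LinearMap.comp_apply, mₕ_tail, φₕ_tail]
      rw [lTensor_comm (G.φₕ_tail t), φₕ_lTensor, lTensor_comm (opₕ_lTensor G.σ (tail t)),
        lTensor_comm (lTensor_comm (mₕ_tail t)), mₕ_lTensor]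
      exact congrArg _ (LinearMap.congr_fun G.comul_mul z)) x

lemma σₕ_φₕ_σₕ'_φₕ (x : A ⊗[ℂ] (A ⊗[ℂ] X)) :
    G.σₕ (◁G.φₕ (G.σₕ' (◁G.φₕ x))) = ◁(◁G.σₕ) (◁G.φₕ (◁G.σₕ' (G.φₕ x))) :=
  LinearMap.congr_fun (f := G.σₕ ∘ₗ ◁G.φₕ ∘ₗ G.σₕ' ∘ₗ ◁G.φₕ)
    (g := ◁(◁G.σₕ) ∘ₗ ◁G.φₕ ∘ₗ ◁G.σₕ' ∘ₗ G.φₕ)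
    (tail_ext₂ fun t z => by
      simp only [LinearMap.comp_apply]
      rw [lTensor_comm (G.φₕ_tail t), opₕ_lTensor, lTensor_comm (G.φₕ_lTensor (tail t)),
        opₕ_lTensor, φₕ_lTensor, lTensor_comm (opₕ_tail G.σ' t),
        lTensor_comm (G.φₕ_lTensor (tail t)), lTensor_comm (lTensor_comm (opₕ_tail G.σ t))]
      exact congrArg _ (LinearMap.congr_fun G.mixed_coassoc z)) x

lemma mₕ_κₕ_φₕ (x : A ⊗[ℂ] X) : mₕ (G.κₕ (G.φₕ x)) = ηₕ (G.εₕ x) :=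
  LinearMap.congr_fun (f := mₕ ∘ₗ G.κₕ ∘ₗ G.φₕ) (g := ηₕ ∘ₗ G.εₕ)
    (tail_ext₁ fun t a => by
      simp only [LinearMap.comp_apply, φₕ_tail, κₕ_lTensor, mₕ_tail, εₕ_tail, ηₕ_smul]
      exact congrArg _ (LinearMap.congr_fun G.antipode_left a)) x

lemma mₕ_lTensor_κₕ_φₕ (x : A ⊗[ℂ] X) : mₕ (◁G.κₕ (G.φₕ x)) = ηₕ (G.εₕ x) :=
  LinearMap.congr_fun (f := mₕ ∘ₗ ◁G.κₕ ∘ₗ G.φₕ) (g := ηₕ ∘ₗ G.εₕ)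
    (tail_ext₁ fun t a => by
      simp only [LinearMap.comp_apply, φₕ_tail, εₕ_tail, ηₕ_smul]
      rw [lTensor_comm (G.κₕ_tail t), mₕ_tail]
      exact congrArg _ (LinearMap.congr_fun G.antipode_right a)) x

lemma σₕ'_mₕ (x : A ⊗[ℂ] (A ⊗[ℂ] (A ⊗[ℂ] X))) :
    G.σₕ' (mₕ x) = ◁mₕ (G.σₕ' (◁G.σₕ' x)) := by
  have h := G.σₕ_lTensor_mₕ (G.σₕ' (◁G.σₕ' x))
  rw [G.σₕ_σₕ', lTensor_cancel G.σₕ_σₕ'] at h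
  rw [← h, G.σₕ'_σₕ]

lemma σₕ'_ηₕ (x : A ⊗[ℂ] X) : G.σₕ' (ηₕ x) = ◁ηₕ x := by
  have mₕ_σₕ_ηₕ (z : A ⊗[ℂ] (A ⊗[ℂ] X)) : mₕ (◁G.σₕ (◁(◁ηₕ) z)) = z := by
    have h := G.σₕ_lTensor_mₕ (◁(◁ηₕ) (G.σₕ' z))
    rw [lTensor_cancel mₕ_lTensor_ηₕ, G.σₕ_σₕ', opₕ_lTensor, G.σₕ_σₕ'] at h
    exact h.symm
  have h := mₕ_σₕ_ηₕ (ηₕ x)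
  rw [← ηₕ_apply, ← ηₕ_apply, mₕ_ηₕ] at h
  rw [← h, G.σₕ'_σₕ]

lemma mₕ_εₕ_mₕ_σₕ_φₕ (x : A ⊗[ℂ] (A ⊗[ℂ] X)) :
    mₕ (G.εₕ (mₕ (◁G.σₕ (G.φₕ (◁G.φₕ x))))) = mₕ x := by
  rw [← G.εₕ_lTensor, ← mₕ_lTensor, ← G.φₕ_mₕ, G.εₕ_φₕ]

lemma εₕ_mₕ_σₕ_φₕ_lTensor (g : X →ₗ[ℂ] Y) (x : A ⊗[ℂ] (A ⊗[ℂ] X)) :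
    G.εₕ (mₕ (◁G.σₕ (G.φₕ (◁(◁g) x)))) = ◁g (G.εₕ (mₕ (◁G.σₕ (G.φₕ x)))) := by
  rw [φₕ_lTensor, lTensor_comm (opₕ_lTensor G.σ g), mₕ_lTensor, εₕ_lTensor]

lemma εₕ_mₕ_σₕ_φₕ (y : A ⊗[ℂ] (A ⊗[ℂ] X)) : G.εₕ (mₕ (◁G.σₕ (G.φₕ y))) = ◁G.εₕ y := by
  have antipode : ◁(◁mₕ) (◁G.φₕ (◁(◁G.κₕ) (◁G.φₕ y))) = ◁(◁ηₕ) y := by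
    rw [lTensor_comm (G.φₕ_lTensor G.κₕ), lTensor_comm G.φₕ_φₕ,
      lTensor_comm₃ (lTensor_comm₃ G.mₕ_lTensor_κₕ_φₕ), lTensor_cancel G.lTensor_εₕ_φₕ]
  have h := congrArg mₕ (G.mₕ_εₕ_mₕ_σₕ_φₕ (◁(◁G.κₕ) (◁G.φₕ y)))
  rwa [← mₕ_lTensor_mₕ, ← mₕ_lTensor_mₕ, lTensor_comm₃ G.mₕ_lTensor_κₕ_φₕ, mₕ_lTensor_ηₕ,
    ← εₕ_mₕ_σₕ_φₕ_lTensor, antipode, εₕ_mₕ_σₕ_φₕ_lTensor, mₕ_lTensor_ηₕ] at h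

lemma lTensor_εₕ_mₕ_σₕ_φₕ (y : A ⊗[ℂ] (A ⊗[ℂ] X)) :
    ◁G.εₕ (◁mₕ (G.σₕ (◁G.φₕ y))) = G.εₕ y := by
  let r : A ⊗[ℂ] (A ⊗[ℂ] X) →ₗ[ℂ] A ⊗[ℂ] X := ◁G.εₕ ∘ₗ ◁mₕ ∘ₗ G.σₕ ∘ₗ ◁G.φₕ
  have mₕ_r (x : A ⊗[ℂ] (A ⊗[ℂ] X)) : mₕ (◁r (G.φₕ x)) = mₕ x := by
    simp only [r, lTensor_comp_apply]
    rw [← G.φₕ_lTensor, mₕ_lTensor, ← G.φₕ_mₕ, lTensor_εₕ_φₕ]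
  calc r y = mₕ (◁r (mₕ (G.κₕ (G.φₕ (G.φₕ y))))) := by
        rw [mₕ_κₕ_φₕ, εₕ_φₕ, ← ηₕ_apply, mₕ_ηₕ]
    _ = mₕ (◁mₕ (◁(◁r) (◁G.φₕ (G.κₕ (G.φₕ y))))) := by
        rw [φₕ_φₕ, κₕ_lTensor, ← mₕ_lTensor, mₕ_lTensor_mₕ]
    _ = mₕ (◁mₕ (G.κₕ (G.φₕ y))) := by
        rw [lTensor_comm₃ (f' := mₕ) (g' := LinearMap.id) mₕ_r, lTensor_id_apply]
    _ = G.εₕ y := by rw [mₕ_lTensor_mₕ, mₕ_κₕ_φₕ, mₕ_ηₕ]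

/-- The operator `α = (ε ⊗ id²)(σ⁻¹ ⊗ id)(id ⊗ φ)` on the first two factors, which is `τσ⁻¹`. -/
def αₕ : A ⊗[ℂ] (A ⊗[ℂ] X) →ₗ[ℂ] A ⊗[ℂ] (A ⊗[ℂ] X) := G.εₕ ∘ₗ G.σₕ' ∘ₗ ◁G.φₕ

lemma εₕ_σₕ'_φₕ (x : A ⊗[ℂ] (A ⊗[ℂ] X)) : G.εₕ (G.σₕ' (◁G.φₕ x)) = G.αₕ x := rfl

lemma lTensor_εₕ_σₕ'_φₕ (x : A ⊗[ℂ] (A ⊗[ℂ] X)) :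
    ◁(◁G.εₕ) (◁G.σₕ' (G.φₕ x)) = G.αₕ x := by
  have h := congrArg ◁G.εₕ (congrArg ◁mₕ (G.σₕ_φₕ_σₕ'_φₕ x))
  have contract (y : A ⊗[ℂ] (A ⊗[ℂ] X)) :
      (G.εₕ ∘ₗ mₕ) (◁G.σₕ (G.φₕ y)) = ◁G.εₕ y := G.εₕ_mₕ_σₕ_φₕ y
  rw [lTensor_εₕ_mₕ_σₕ_φₕ, ← lTensor_comp_apply _ G.εₕ, lTensor_comm₃ (g' := LinearMap.id) contract,
    lTensor_id_apply] at h
  exact h.symm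

lemma αₕ_lTensor (g : X →ₗ[ℂ] Y) (x : A ⊗[ℂ] (A ⊗[ℂ] X)) :
    G.αₕ (◁(◁g) x) = ◁(◁g) (G.αₕ x) := by
  rw [← εₕ_σₕ'_φₕ, ← εₕ_σₕ'_φₕ, lTensor_comm (G.φₕ_lTensor g), opₕ_lTensor, εₕ_lTensor]

lemma φₕ_αₕ (x : A ⊗[ℂ] (A ⊗[ℂ] X)) : G.φₕ (G.αₕ x) = ◁G.αₕ (G.φₕ x) := by
  have contract (y : A ⊗[ℂ] (A ⊗[ℂ] (A ⊗[ℂ] X))) :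
      ◁(◁(◁G.εₕ)) (◁(◁G.σₕ') (◁G.φₕ y)) = ◁G.αₕ y := by
    rw [lTensor_comm₃ (g' := LinearMap.id) G.lTensor_εₕ_σₕ'_φₕ, lTensor_id_apply]
  rw [← lTensor_εₕ_σₕ'_φₕ, φₕ_lTensor, φₕ_lTensor, φₕ_φₕ, contract]

lemma lTensor_φₕ_αₕ (x : A ⊗[ℂ] (A ⊗[ℂ] X)) : ◁G.φₕ (G.αₕ x) = G.αₕ (◁G.φₕ x) := by
  rw [← εₕ_σₕ'_φₕ, ← εₕ_σₕ'_φₕ, ← εₕ_lTensor, ← opₕ_lTensor, lTensor_comm G.φₕ_φₕ]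

lemma σₕ'_φₕ_σₕ'_φₕ (x : A ⊗[ℂ] (A ⊗[ℂ] X)) :
    ◁(◁G.σₕ') (◁G.φₕ (G.σₕ' (◁G.φₕ x))) = G.σₕ' (◁G.φₕ (◁G.σₕ' (G.φₕ x))) := by
  have h := congrArg ◁(◁G.σₕ') (congrArg G.σₕ' (G.σₕ_φₕ_σₕ'_φₕ x))
  rwa [σₕ'_σₕ, opₕ_lTensor, lTensor_cancel (lTensor_cancel G.σₕ'_σₕ)] at h

lemma lTensor_σₕ'_φₕ_αₕ (x : A ⊗[ℂ] (A ⊗[ℂ] X)) :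
    ◁G.σₕ' (G.φₕ (G.αₕ x)) = G.αₕ (◁G.σₕ' (G.φₕ x)) := by
  have h := congrArg G.εₕ (G.σₕ'_φₕ_σₕ'_φₕ x)
  rwa [εₕ_lTensor, εₕ_lTensor] at h

lemma σₕ'_φₕ_αₕ (x : A ⊗[ℂ] (A ⊗[ℂ] X)) :
    G.σₕ' (◁G.φₕ (G.αₕ x)) = ◁G.αₕ (G.σₕ' (◁G.φₕ x)) := by
  have h := congrArg ◁(◁(◁G.εₕ)) (G.σₕ'_φₕ_σₕ'_φₕ x)
  rw [lTensor_comm₃ (g' := LinearMap.id) G.lTensor_εₕ_σₕ'_φₕ, lTensor_id_apply, ← opₕ_lTensor,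
    ← lTensor_comm (G.φₕ_lTensor G.εₕ), lTensor_εₕ_σₕ'_φₕ] at h
  exact h.symm

lemma εₕ_αₕ (x : A ⊗[ℂ] (A ⊗[ℂ] X)) : G.εₕ (G.αₕ x) = ◁G.εₕ (G.σₕ' x) := by
  rw [← lTensor_εₕ_σₕ'_φₕ, εₕ_lTensor, εₕ_lTensor, εₕ_φₕ]

lemma lTensor_mₕ_σₕ'_κₕ_σₕ'_φₕ (x : A ⊗[ℂ] (A ⊗[ℂ] X)) :
    ◁mₕ (G.σₕ' (G.κₕ (◁G.σₕ' (G.φₕ x)))) = ◁ηₕ (G.εₕ x) := by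
  rw [κₕ_lTensor, ← σₕ'_mₕ, mₕ_κₕ_φₕ, σₕ'_ηₕ]

/- This lets `σ₂₃⁻¹φ₁` be cancelled on the right: an identity between natural operators may be
checked after composing with `σ₂₃⁻¹φ₁` and multiplying two factors, one being the last. -/
lemma lTensor_mₕ_σₕ'_φₕ_σₕ'_κₕ_φₕ (x : A ⊗[ℂ] (A ⊗[ℂ] X)) :
    ◁(◁mₕ) (◁G.σₕ' (G.φₕ (◁G.σₕ' (◁G.κₕ (G.φₕ x))))) = ◁(◁ηₕ) x := by
  rw [φₕ_lTensor, φₕ_lTensor, φₕ_φₕ, lTensor_comm₃ fun z => (G.σₕ'_mₕ z).symm,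
    lTensor_comm₃ G.mₕ_lTensor_κₕ_φₕ, lTensor_εₕ_φₕ, lTensor_comp_eq G.σₕ'_ηₕ]

/-- The operator `(ε ⊗ id)σ⁻¹` on the first two factors. -/
def tₕ : A ⊗[ℂ] (A ⊗[ℂ] X) →ₗ[ℂ] A ⊗[ℂ] X := G.εₕ ∘ₗ G.σₕ'

lemma εₕ_σₕ' (x : A ⊗[ℂ] (A ⊗[ℂ] X)) : G.εₕ (G.σₕ' x) = G.tₕ x := rfl

lemma tₕ_lTensor (g : X →ₗ[ℂ] Y) (x : A ⊗[ℂ] (A ⊗[ℂ] X)) : G.tₕ (◁(◁g) x) = ◁g (G.tₕ x) := by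
  simp only [tₕ, LinearMap.comp_apply, opₕ_lTensor, εₕ_lTensor]

lemma lTensor_εₕ_αₕ (x : A ⊗[ℂ] (A ⊗[ℂ] X)) : ◁G.εₕ (G.αₕ x) = G.tₕ x := by
  rw [← εₕ_σₕ'_φₕ, ← εₕ_lTensor, ← opₕ_lTensor, lTensor_cancel G.lTensor_εₕ_φₕ]
  rfl

lemma φₕ_tₕ (x : A ⊗[ℂ] (A ⊗[ℂ] X)) : G.φₕ (G.tₕ x) = ◁G.tₕ (G.φₕ x) := by
  rw [← lTensor_εₕ_αₕ, φₕ_lTensor, φₕ_αₕ, lTensor_comp_eq G.lTensor_εₕ_αₕ]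

lemma mₕ_tₕ_κₕ_αₕ_σₕ'_φₕ (x : A ⊗[ℂ] (A ⊗[ℂ] X)) :
    mₕ (G.tₕ (G.κₕ (G.αₕ (◁G.σₕ' (G.φₕ x))))) = mₕ (G.κₕ (◁G.εₕ (◁G.σₕ' (G.φₕ x)))) := by
  calc mₕ (G.tₕ (G.κₕ (G.αₕ (◁G.σₕ' (G.φₕ x)))))
      = G.εₕ (◁mₕ (G.σₕ' (G.κₕ (◁G.σₕ' (G.φₕ (G.αₕ x)))))) := by
        rw [← lTensor_σₕ'_φₕ_αₕ, εₕ_lTensor, tₕ, LinearMap.comp_apply]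
    _ = ηₕ (G.εₕ (G.tₕ x)) := by
        rw [lTensor_mₕ_σₕ'_κₕ_σₕ'_φₕ, εₕ_lTensor, ← lTensor_εₕ_αₕ, εₕ_lTensor]
    _ = mₕ (G.κₕ (◁G.εₕ (◁G.σₕ' (G.φₕ x)))) := by
        rw [lTensor_comp_eq G.εₕ_σₕ', ← φₕ_tₕ, mₕ_κₕ_φₕ]

lemma tₕ_κₕ_αₕ (x : A ⊗[ℂ] (A ⊗[ℂ] X)) : G.tₕ (G.κₕ (G.αₕ x)) = G.κₕ (◁G.εₕ x) := by
  have h := congrArg mₕ (G.mₕ_tₕ_κₕ_αₕ_σₕ'_φₕ (◁G.σₕ' (◁G.κₕ (G.φₕ x))))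
  rwa [← mₕ_lTensor_mₕ, ← mₕ_lTensor_mₕ, ← tₕ_lTensor, ← κₕ_lTensor, ← αₕ_lTensor,
    ← κₕ_lTensor, ← lTensor_comm (G.εₕ_lTensor mₕ), lTensor_mₕ_σₕ'_φₕ_σₕ'_κₕ_φₕ, αₕ_lTensor,
    κₕ_lTensor, tₕ_lTensor, mₕ_lTensor_ηₕ, lTensor_comm (G.εₕ_lTensor ηₕ), κₕ_lTensor,
    mₕ_lTensor_ηₕ] at h

lemma αₕ_κₕ_αₕ (x : A ⊗[ℂ] (A ⊗[ℂ] X)) : G.αₕ (G.κₕ (G.αₕ x)) = G.κₕ x := by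
  change G.tₕ (◁G.φₕ (G.κₕ (G.αₕ x))) = _
  rw [← κₕ_lTensor, lTensor_φₕ_αₕ, tₕ_κₕ_αₕ, lTensor_cancel G.εₕ_φₕ]

lemma αₕ_bijective : Function.Bijective (G.αₕ : A ⊗[ℂ] (A ⊗[ℂ] X) →ₗ[ℂ] _) := by
  refine ⟨fun x y hxy => G.κₕ_bijective.1 ?_, fun x => ?_⟩
  · rw [← αₕ_κₕ_αₕ, hxy, αₕ_κₕ_αₕ]
  · obtain ⟨y, rfl⟩ := G.κₕ_bijective.2 x
    exact ⟨_, G.αₕ_κₕ_αₕ y⟩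

lemma lTensor_mₕ_φₕ_σₕ'_κₕ_αₕ (x : A ⊗[ℂ] (A ⊗[ℂ] X)) :
    ◁(◁mₕ) (◁G.σₕ' (◁G.κₕ (G.σₕ' (◁G.φₕ (◁G.σₕ' (G.φₕ x)))))) =
      ◁(◁mₕ) (G.φₕ (G.σₕ' (G.κₕ (G.αₕ (◁G.σₕ' (G.φₕ x)))))) := by
  have contract (w : A ⊗[ℂ] (A ⊗[ℂ] (A ⊗[ℂ] X))) :
      ◁(◁mₕ) (◁G.σₕ' (◁G.κₕ (◁(◁G.σₕ') (◁G.φₕ w)))) = ◁(◁ηₕ) (◁G.εₕ w) := by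
    simpa only [lTensor_comp_apply] using lTensor_comm (f := ◁mₕ ∘ₗ G.σₕ' ∘ₗ G.κₕ ∘ₗ ◁G.σₕ')
      G.lTensor_mₕ_σₕ'_κₕ_σₕ'_φₕ w
  calc _ = ◁(◁ηₕ) (◁G.εₕ (G.σₕ' (◁G.φₕ x))) := by
        rw [← σₕ'_φₕ_σₕ'_φₕ, contract]
    _ = ◁(◁ηₕ) (G.φₕ (G.εₕ (G.αₕ x))) := by
        rw [← εₕ_αₕ, ← lTensor_φₕ_αₕ, εₕ_lTensor]
    _ = _ := by
        rw [← lTensor_σₕ'_φₕ_αₕ, ← φₕ_lTensor, ← φₕ_lTensor, lTensor_mₕ_σₕ'_κₕ_σₕ'_φₕ]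

lemma σₕ'_κₕ_σₕ'_φₕ_lTensor (g : X →ₗ[ℂ] Y) (x : A ⊗[ℂ] (A ⊗[ℂ] X)) :
    ◁G.σₕ' (◁G.κₕ (G.σₕ' (◁G.φₕ (◁(◁g) x)))) =
      ◁(◁(◁g)) (◁G.σₕ' (◁G.κₕ (G.σₕ' (◁G.φₕ x)))) := by
  rw [lTensor_comm (G.φₕ_lTensor g), opₕ_lTensor, lTensor_comm (G.κₕ_lTensor (◁g)),
    lTensor_comm (opₕ_lTensor G.σ' g)]

lemma φₕ_σₕ'_κₕ_αₕ_lTensor (g : X →ₗ[ℂ] Y) (x : A ⊗[ℂ] (A ⊗[ℂ] X)) :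
    G.φₕ (G.σₕ' (G.κₕ (G.αₕ (◁(◁g) x)))) = ◁(◁(◁g)) (G.φₕ (G.σₕ' (G.κₕ (G.αₕ x)))) := by
  rw [αₕ_lTensor, κₕ_lTensor, opₕ_lTensor, φₕ_lTensor]

lemma σₕ'_κₕ_σₕ'_φₕ (x : A ⊗[ℂ] (A ⊗[ℂ] X)) :
    ◁G.σₕ' (◁G.κₕ (G.σₕ' (◁G.φₕ x))) = G.φₕ (G.σₕ' (G.κₕ (G.αₕ x))) := by
  have h := congrArg ◁(◁mₕ) (G.lTensor_mₕ_φₕ_σₕ'_κₕ_αₕ (◁G.σₕ' (◁G.κₕ (G.φₕ x))))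
  simp only [← lTensor_comm (lTensor_comm mₕ_lTensor_mₕ)] at h
  rwa [← σₕ'_κₕ_σₕ'_φₕ_lTensor, ← φₕ_σₕ'_κₕ_αₕ_lTensor, lTensor_mₕ_σₕ'_φₕ_σₕ'_κₕ_φₕ,
    σₕ'_κₕ_σₕ'_φₕ_lTensor, φₕ_σₕ'_κₕ_αₕ_lTensor, lTensor_cancel (lTensor_cancel mₕ_lTensor_ηₕ),
    lTensor_cancel (lTensor_cancel mₕ_lTensor_ηₕ)] at h

lemma lTensor_κₕ_σₕ' (x : A ⊗[ℂ] (A ⊗[ℂ] X)) :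
    ◁G.κₕ (G.σₕ' x) = G.σₕ' (G.κₕ (G.αₕ (G.αₕ x))) := by
  have h := congrArg ◁G.εₕ (G.σₕ'_κₕ_σₕ'_φₕ (G.αₕ x))
  rwa [lTensor_εₕ_φₕ, σₕ'_φₕ_αₕ, lTensor_comp_eq G.εₕ_σₕ', lTensor_comm₃ G.tₕ_κₕ_αₕ,
    ← opₕ_lTensor, lTensor_cancel G.lTensor_εₕ_φₕ] at h

lemma φₕ_σₕ'_αₕ (x : A ⊗[ℂ] (A ⊗[ℂ] X)) :
    G.φₕ (G.σₕ' (G.αₕ x)) = ◁G.σₕ' (G.σₕ' (◁G.φₕ x)) := by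
  obtain ⟨y, rfl⟩ := (G.κₕ_bijective.comp (G.αₕ_bijective.comp G.αₕ_bijective)).2 x
  simp only [Function.comp_apply]
  rw [αₕ_κₕ_αₕ, ← σₕ'_κₕ_σₕ'_φₕ, lTensor_κₕ_σₕ', ← lTensor_φₕ_αₕ, ← lTensor_φₕ_αₕ, ← κₕ_lTensor]

lemma lTensor_φₕ_σₕ'_φₕ_αₕ (x : A ⊗[ℂ] (A ⊗[ℂ] X)) :
    ◁G.φₕ (G.σₕ' (◁G.φₕ (G.αₕ x))) = G.σₕ' (◁G.σₕ' (◁(◁G.φₕ) (G.φₕ x))) := by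
  have h := G.σₕ'_φₕ_σₕ'_φₕ (G.αₕ x)
  have φₕ_σₕ'_αₕ₂ (y : A ⊗[ℂ] (A ⊗[ℂ] (A ⊗[ℂ] X))) :
      ◁G.φₕ (◁G.σₕ' (◁G.αₕ y)) = ◁(◁G.σₕ') (◁G.σₕ' (◁(◁G.φₕ) y)) := by
    rw [lTensor_comm₃ (g' := G.σₕ' ∘ₗ ◁G.φₕ) G.φₕ_σₕ'_αₕ, lTensor_comp_apply]
  rw [φₕ_αₕ, φₕ_σₕ'_αₕ₂, opₕ_lTensor] at h
  have h := congrArg ◁(◁G.σₕ) h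
  rwa [lTensor_cancel (lTensor_cancel G.σₕ_σₕ'), lTensor_cancel (lTensor_cancel G.σₕ_σₕ')] at h

lemma lTensor_φₕ_σₕ'_αₕ (x : A ⊗[ℂ] (A ⊗[ℂ] X)) :
    ◁G.φₕ (G.σₕ' (G.αₕ x)) = G.σₕ' (◁G.σₕ' (G.φₕ x)) := by
  have h := congrArg ◁(◁(◁G.εₕ)) (G.lTensor_φₕ_σₕ'_φₕ_αₕ x)
  rwa [← lTensor_comm (G.φₕ_lTensor G.εₕ), ← opₕ_lTensor, lTensor_cancel G.lTensor_εₕ_φₕ,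
    ← opₕ_lTensor, ← lTensor_comm (opₕ_lTensor G.σ' G.εₕ),
    lTensor_cancel (lTensor_cancel G.lTensor_εₕ_φₕ)] at h

lemma opₕ_τ (x : A ⊗[ℂ] (A ⊗[ℂ] X)) : opₕ G.τ x = G.αₕ (G.σₕ x) := by
  have h : opₕ (G.ε3r ∘ₗ op23 G.σ' ∘ₗ G.φ1) = (G.αₕ : A ⊗[ℂ] (A ⊗[ℂ] X) →ₗ[ℂ] _) :=
    tail_ext₂ fun t z => by
      rw [opₕ_tail, ← lTensor_εₕ_σₕ'_φₕ, φₕ_lTensor, lTensor_comm (opₕ_tail G.σ' t),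
        lTensor_comm (g' := (TensorProduct.rid ℂ A).toLinearMap ∘ₗ ◁G.ε) (G.lTensor_εₕ_tail t)]
      rfl
  rw [← h, ← opₕ_comp]
  rfl

lemma opₕ_τ_σₕ' (x : A ⊗[ℂ] (A ⊗[ℂ] X)) : opₕ G.τ (G.σₕ' x) = G.αₕ x := by
  rw [opₕ_τ, σₕ_σₕ']

lemma lTensor_φₕ_σₕ_eq_τ_σ (x : A ⊗[ℂ] (A ⊗[ℂ] X)) :
    ◁G.φₕ (G.σₕ x) = opₕ G.τ (◁G.σₕ (G.φₕ x)) := by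
  obtain ⟨y, hy⟩ := G.αₕ_bijective.2 (G.σₕ x)
  have h := G.φₕ_σₕ'_αₕ y
  rw [hy, σₕ'_σₕ] at h
  rw [opₕ_τ, h, lTensor_cancel G.σₕ_σₕ', σₕ_σₕ', ← lTensor_φₕ_αₕ, hy]

lemma φₕ_σₕ_eq_σ_τ (x : A ⊗[ℂ] (A ⊗[ℂ] X)) :
    G.φₕ (G.σₕ x) = ◁G.σₕ (opₕ G.τ (◁G.φₕ x)) := by
  obtain ⟨y, hy⟩ := G.αₕ_bijective.2 (G.σₕ x)
  have h := G.lTensor_φₕ_σₕ'_αₕ y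
  rw [hy, σₕ'_σₕ] at h
  rw [opₕ_τ, h, σₕ_σₕ', ← lTensor_σₕ'_φₕ_αₕ, hy, lTensor_cancel G.σₕ_σₕ']

lemma lTensor_φₕ_σₕ_eq_σ_τ (x : A ⊗[ℂ] (A ⊗[ℂ] X)) :
    ◁G.φₕ (G.σₕ x) = G.σₕ (◁(opₕ G.τ) (G.φₕ x)) := by
  obtain ⟨y, hy⟩ := G.αₕ_bijective.2 (G.σₕ x)
  have h := G.φₕ_σₕ'_αₕ y
  rw [hy, σₕ'_σₕ] at h
  rw [h, lTensor_comp_eq G.opₕ_τ_σₕ', ← σₕ'_φₕ_αₕ, hy, σₕ_σₕ']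

lemma ext_tail_one {f g : T2 A →ₗ[ℂ] T3 A}
    (h : ∀ z, ◁(◁(tail (1 : ℂ))) (f z) = ◁(◁(tail (1 : ℂ))) (g z)) : f = g := by
  have rid_tail_one (a : A) : (TensorProduct.rid ℂ A).toLinearMap (tail 1 a) = a := by
    simp [tail]
  exact LinearMap.ext fun z =>
    Function.LeftInverse.injective (lTensor_cancel (lTensor_cancel rid_tail_one)) (h z)

end HeadOperators

end BQG

/-- Pentagonal relations `(id⊗φ)σ = (τ⊗id)(id⊗σ)(φ⊗id)`,
`(φ⊗id)σ = (id⊗σ)(τ⊗id)(id⊗φ)` and `(id⊗φ)σ = (σ⊗id)(id⊗τ)(φ⊗id)`. -/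
theorem bqg_pentagon_2 {A : Type*} [Ring A] [Algebra ℂ A] (G : BQG A) :
    G.φ2 ∘ₗ G.σ = op12 G.τ ∘ₗ op23 G.σ ∘ₗ G.φ1 ∧
    G.φ1 ∘ₗ G.σ = op23 G.σ ∘ₗ op12 G.τ ∘ₗ G.φ2 ∧
    G.φ2 ∘ₗ G.σ = op12 G.σ ∘ₗ op23 G.τ ∘ₗ G.φ1 := by
  refine ⟨BQG.ext_tail_one fun z => ?_, BQG.ext_tail_one fun z => ?_,
    BQG.ext_tail_one fun z => ?_⟩
  · have h := G.lTensor_φₕ_σₕ_eq_τ_σ (lTensor A (BQG.tail (1 : ℂ)) z)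
    rwa [BQG.opₕ_tail, BQG.φₕ_lTensor, BQG.lTensor_comm (G.φₕ_tail 1),
      BQG.lTensor_comm (BQG.opₕ_tail G.σ 1), BQG.opₕ_lTensor] at h
  · have h := G.φₕ_σₕ_eq_σ_τ (lTensor A (BQG.tail (1 : ℂ)) z)
    rwa [BQG.opₕ_tail, BQG.φₕ_lTensor, BQG.lTensor_comm (G.φₕ_tail 1), BQG.opₕ_lTensor,
      BQG.lTensor_comm (BQG.opₕ_tail G.σ 1)] at h
  · have h := G.lTensor_φₕ_σₕ_eq_σ_τ (lTensor A (BQG.tail (1 : ℂ)) z)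
    rwa [BQG.opₕ_tail, BQG.φₕ_lTensor, BQG.lTensor_comm (G.φₕ_tail 1),
      BQG.lTensor_comm (BQG.opₕ_tail G.τ 1), BQG.opₕ_lTensor] at h
end
end

section
/- In a braided quantum group, the secondary braiding τ satisfies the pentagonal coproduct relations (φ⊗id)τ = (id⊗τ)(τ⊗id)(id⊗φ) and (id⊗φ)τ = (τ⊗id)(id⊗τ)(φ⊗id). -/
open TensorProduct LinearMap

noncomputable section

variable (A : Type*) [Ring A] [Algebra ℂ A]

variable {A}

/-!
Write `T` for the map obtained from `τ` by exchanging `σ` and `σ⁻¹`, and `φ₁ = φ⊗id`, `φ₂ = id⊗φ`.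
Slicing the mixed coassociativity axiom with `ε` on its last, respectively first, leg gives
`T₂₃φ₁ = σ₁₂φ₂σ⁻¹` and `T₁₂φ₂ = σ₂₃φ₁σ⁻¹`, and slicing these once more gives the pentagons
`φ₁T = T₂₃T₁₂φ₂` and `φ₂T = T₁₂T₂₃φ₁`. It remains to invert `T`. Applying `id⊗ε` to the
multiplicativity of `φ` and cancelling with the left antipode shows that the form `b = εm` satisfies
`(id⊗b)σ₁₂φ₂ = ε⊗id`. Consequently `Tσ`, a bicomodule endomorphism of `H ⊗ H`, is inverted from the
left by `a ⊗ y ↦ a₁ ⊗ b(a₂ ⊗ y₁) y₂`. This left inverse expresses `τ` through `σ₁₂φ₂`, and then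
`Tτ = id` is a computation, so that `τ = T⁻¹` and inverting the two pentagons for `T` gives those
for `τ`.
-/

namespace BraidedCoalgebra

section Legs

variable {R M M' N P Q S X Y : Type*} [CommSemiring R]
  [AddCommMonoid M] [Module R M] [AddCommMonoid M'] [Module R M'] [AddCommMonoid N] [Module R N]
  [AddCommMonoid P] [Module R P] [AddCommMonoid Q] [Module R Q] [AddCommMonoid S] [Module R S]
  [AddCommMonoid X] [Module R X] [AddCommMonoid Y] [Module R Y]

/-- The slice map `c ⊗ id : N ⊗ X → X` of a functional `c` on the left leg. -/
def sliceLeft (X : Type*) [AddCommMonoid X] [Module R X] (c : N →ₗ[R] R) : N ⊗[R] X →ₗ[R] X :=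
  (TensorProduct.lid R X).toLinearMap ∘ₗ c.rTensor X

/-- The slice map `id ⊗ c : M ⊗ N → M` of a functional `c` on the right leg. -/
def sliceRight (M : Type*) [AddCommMonoid M] [Module R M] (c : N →ₗ[R] R) : M ⊗[R] N →ₗ[R] M :=
  (TensorProduct.rid R M).toLinearMap ∘ₗ c.lTensor M

/-- The map `f ⊗ id` on a right-associated triple tensor product; this is the leg notation `f₁₂`. -/
def rTensorAssoc (X : Type*) [AddCommMonoid X] [Module R X] (f : M ⊗[R] N →ₗ[R] P ⊗[R] Q) :
    M ⊗[R] (N ⊗[R] X) →ₗ[R] P ⊗[R] (Q ⊗[R] X) :=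
  (TensorProduct.assoc R P Q X).toLinearMap ∘ₗ f.rTensor X ∘ₗ
    (TensorProduct.assoc R M N X).symm.toLinearMap

lemma sliceLeft_comp_lTensor (c : N →ₗ[R] R) (g : X →ₗ[R] Y) :
    sliceLeft Y c ∘ₗ g.lTensor N = g ∘ₗ sliceLeft X c := by
  ext
  simp [sliceLeft]

lemma sliceRight_comp_rTensor (c : N →ₗ[R] R) (g : M →ₗ[R] M') :
    sliceRight M' c ∘ₗ g.rTensor N = g ∘ₗ sliceRight M c := by
  ext
  simp [sliceRight]

lemma sliceRight_comp_lTensor (c : P →ₗ[R] R) (g : N →ₗ[R] P) :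
    sliceRight M c ∘ₗ g.lTensor M = sliceRight M (c ∘ₗ g) := by
  ext
  simp [sliceRight]

lemma comp_sliceLeft (c : M →ₗ[R] R) (b : X →ₗ[R] R) :
    b ∘ₗ sliceLeft X c = c ∘ₗ sliceRight M b := by
  ext
  simp [sliceLeft, sliceRight, mul_comm]

lemma sliceLeft_comp_assoc (c : M →ₗ[R] R) :
    sliceLeft (N ⊗[R] X) c ∘ₗ (TensorProduct.assoc R M N X).toLinearMap =
      (sliceLeft N c).rTensor X := by
  ext
  simp [sliceLeft, smul_tmul']

lemma sliceRight_comp_assoc_symm (c : X →ₗ[R] R) :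
    sliceRight (M ⊗[R] N) c ∘ₗ (TensorProduct.assoc R M N X).symm.toLinearMap =
      (sliceRight N c).lTensor M := by
  ext
  simp [sliceRight]

lemma rTensorAssoc_id :
    rTensorAssoc X (LinearMap.id : M ⊗[R] N →ₗ[R] M ⊗[R] N) = LinearMap.id := by
  ext
  simp [rTensorAssoc]

lemma rTensorAssoc_comp (g : P ⊗[R] Q →ₗ[R] S ⊗[R] Y) (f : M ⊗[R] N →ₗ[R] P ⊗[R] Q) :
    rTensorAssoc X (g ∘ₗ f) = rTensorAssoc X g ∘ₗ rTensorAssoc X f := by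
  ext
  simp [rTensorAssoc]

lemma rTensorAssoc_lTensor (g : N →ₗ[R] P) :
    rTensorAssoc X (g.lTensor M) = (g.rTensor X).lTensor M := by
  ext
  simp [rTensorAssoc]

lemma rTensorAssoc_comp_lTensor_lTensor (f : M ⊗[R] N →ₗ[R] P ⊗[R] Q) (g : X →ₗ[R] Y) :
    rTensorAssoc Y f ∘ₗ (g.lTensor N).lTensor M = (g.lTensor Q).lTensor P ∘ₗ rTensorAssoc X f := by
  simp only [rTensorAssoc, coassoc_simps]

lemma comp_lTensor_sliceRight (f : M ⊗[R] N →ₗ[R] P ⊗[R] Q) (c : X →ₗ[R] R) :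
    f ∘ₗ (sliceRight N c).lTensor M = (sliceRight Q c).lTensor P ∘ₗ rTensorAssoc X f := by
  rw [← sliceRight_comp_assoc_symm, ← sliceRight_comp_assoc_symm, ← comp_assoc,
    ← sliceRight_comp_rTensor]
  simp only [rTensorAssoc, coassoc_simps]

lemma lTensor_assoc_comp_rTensorAssoc_rTensorAssoc (f : M ⊗[R] N →ₗ[R] P ⊗[R] Q) :
    (TensorProduct.assoc R Q Y X).toLinearMap.lTensor P ∘ₗ rTensorAssoc X (rTensorAssoc Y f) =
      rTensorAssoc (Y ⊗[R] X) f ∘ₗ (TensorProduct.assoc R N Y X).toLinearMap.lTensor M := by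
  simp only [rTensorAssoc, assoc_tensor'', coassoc_simps]

lemma rTensorAssoc_sliceLeft_comp (c : P →ₗ[R] R) (F : M ⊗[R] N →ₗ[R] P ⊗[R] (Q ⊗[R] S)) :
    rTensorAssoc X (sliceLeft (Q ⊗[R] S) c ∘ₗ F) =
      sliceLeft (Q ⊗[R] (S ⊗[R] X)) c ∘ₗ
        (TensorProduct.assoc R Q S X).toLinearMap.lTensor P ∘ₗ rTensorAssoc X F := by
  rw [← comp_assoc, sliceLeft_comp_lTensor, rTensorAssoc, rTensorAssoc, rTensor_comp,
    ← sliceLeft_comp_assoc]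
  rfl

lemma sliceLeft_comp_assoc_symm_comp_rTensorAssoc (b : P ⊗[R] Q →ₗ[R] R)
    (f : M ⊗[R] N →ₗ[R] P ⊗[R] Q) :
    sliceLeft X b ∘ₗ (TensorProduct.assoc R P Q X).symm.toLinearMap ∘ₗ rTensorAssoc X f =
      sliceLeft X (b ∘ₗ f) ∘ₗ (TensorProduct.assoc R M N X).symm.toLinearMap := by
  ext
  simp [sliceLeft, rTensorAssoc]

lemma sliceLeft_comp_sliceLeft_comp_assoc_symm (c : M →ₗ[R] R) (d : N →ₗ[R] R) :
    sliceLeft X (d ∘ₗ sliceLeft N c) ∘ₗ (TensorProduct.assoc R M N X).symm.toLinearMap =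
      sliceLeft X c ∘ₗ (sliceLeft X d).lTensor M := by
  ext
  simp [sliceLeft, smul_smul, mul_comm]

end Legs

section Comul

open Coalgebra

variable {R H X Y M : Type*} [CommSemiring R] [AddCommMonoid H] [Module R H] [Coalgebra R H]
  [AddCommMonoid X] [Module R X] [AddCommMonoid Y] [Module R Y] [AddCommMonoid M] [Module R M]

variable (R H X) in
/-- The map `φ ⊗ id : H ⊗ X → H ⊗ (H ⊗ X)`, the cofree left coaction. -/
def comulLeft : H ⊗[R] X →ₗ[R] H ⊗[R] (H ⊗[R] X) :=
  (TensorProduct.assoc R H H X).toLinearMap ∘ₗ comul.rTensor X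

lemma sliceLeft_counit_comp_comul : sliceLeft H counit ∘ₗ comul = (LinearMap.id : H →ₗ[R] H) := by
  rw [sliceLeft, comp_assoc, rTensor_counit_comp_comul]
  ext
  simp

lemma sliceRight_counit_comp_comul : sliceRight H counit ∘ₗ comul = (LinearMap.id : H →ₗ[R] H) := by
  rw [sliceRight, comp_assoc, lTensor_counit_comp_comul]
  ext
  simp

lemma comulLeft_comp_lTensor (g : X →ₗ[R] Y) :
    comulLeft R H Y ∘ₗ g.lTensor H = (g.lTensor H).lTensor H ∘ₗ comulLeft R H X := by
  simp only [comulLeft, coassoc_simps]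

lemma sliceLeft_counit_comp_comulLeft :
    sliceLeft (H ⊗[R] X) counit ∘ₗ comulLeft R H X = LinearMap.id := by
  rw [comulLeft, ← comp_assoc, sliceLeft_comp_assoc, ← rTensor_comp, sliceLeft_counit_comp_comul,
    rTensor_id]

lemma lTensor_sliceLeft_counit_comp_comulLeft :
    (sliceLeft X counit).lTensor H ∘ₗ comulLeft R H X = LinearMap.id := by
  have h : (sliceLeft X counit).lTensor H ∘ₗ (TensorProduct.assoc R H H X).toLinearMap =
      (sliceRight H (counit : H →ₗ[R] R)).rTensor X := by
    ext
    simp [sliceLeft, sliceRight, smul_tmul']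
  rw [comulLeft, ← comp_assoc, h, ← rTensor_comp, sliceRight_counit_comp_comul, rTensor_id]

lemma lTensor_sliceRight_comp_comulLeft (c : X →ₗ[R] R) :
    (sliceRight H c).lTensor H ∘ₗ comulLeft R H X = comul ∘ₗ sliceRight H c := by
  rw [← sliceRight_comp_rTensor, ← sliceRight_comp_assoc_symm]
  ext
  simp [comulLeft]

lemma lTensor_assoc_comp_rTensorAssoc_comulLeft :
    (TensorProduct.assoc R H X Y).toLinearMap.lTensor H ∘ₗ rTensorAssoc Y (comulLeft R H X) =
      comulLeft R H (X ⊗[R] Y) := by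
  simp only [rTensorAssoc, comulLeft, assoc_tensor', coassoc_simps]

lemma lTensor_assoc_comp_rTensorAssoc_lTensor_comul :
    (TensorProduct.assoc R H H X).toLinearMap.lTensor M ∘ₗ
        rTensorAssoc X ((comul : H →ₗ[R] H ⊗[R] H).lTensor M) = (comulLeft R H X).lTensor M := by
  rw [rTensorAssoc_lTensor, ← lTensor_comp, comulLeft]

lemma comulLeft_comp_comul :
    comulLeft R H H ∘ₗ comul = comul.lTensor H ∘ₗ (comul : H →ₗ[R] H ⊗[R] H) :=
  coassoc

lemma comulLeft_comp_comulLeft :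
    comulLeft R H (H ⊗[R] X) ∘ₗ comulLeft R H X =
      (comulLeft R H X).lTensor H ∘ₗ comulLeft R H X :=
  calc comulLeft R H (H ⊗[R] X) ∘ₗ comulLeft R H X
    _ = (TensorProduct.assoc R H H X).toLinearMap.lTensor H ∘ₗ
          (TensorProduct.assoc R H (H ⊗[R] H) X).toLinearMap ∘ₗ
            (comulLeft R H H ∘ₗ comul).rTensor X := by
      rw [← lTensor_assoc_comp_rTensorAssoc_comulLeft]
      simp only [rTensorAssoc, comulLeft, coassoc_simps]
    _ = (comulLeft R H X).lTensor H ∘ₗ comulLeft R H X := by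
      rw [comulLeft_comp_comul]
      simp only [comulLeft, coassoc_simps]

/-- The mixed coassociativity axiom
`(σ⊗id²)(id⊗φ⊗id)(σ⁻¹⊗id)(id⊗φ) = (id²⊗σ)(id⊗φ⊗id)(id⊗σ⁻¹)(φ⊗id)` relating a braiding `σ` of a
coalgebra to its coproduct `φ`. -/
def MixedCoassoc (σ : H ⊗[R] H ≃ₗ[R] H ⊗[R] H) : Prop :=
  rTensorAssoc (H ⊗[R] H) σ.toLinearMap ∘ₗ (comulLeft R H H).lTensor H ∘ₗ
      rTensorAssoc H σ.symm.toLinearMap ∘ₗ comul.lTensor H =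
    (σ.toLinearMap.lTensor H).lTensor H ∘ₗ (comulLeft R H H).lTensor H ∘ₗ
      σ.symm.toLinearMap.lTensor H ∘ₗ comulLeft R H H

/-- The secondary braiding `τ = (id²⊗ε)(id⊗σ⁻¹)(φ⊗id)σ`. Its inverse will turn out to be
`secondaryBraiding σ.symm`. -/
def secondaryBraiding (σ : H ⊗[R] H ≃ₗ[R] H ⊗[R] H) : H ⊗[R] H →ₗ[R] H ⊗[R] H :=
  (sliceRight H counit).lTensor H ∘ₗ σ.symm.toLinearMap.lTensor H ∘ₗ comulLeft R H H ∘ₗ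
    σ.toLinearMap

variable {σ : H ⊗[R] H ≃ₗ[R] H ⊗[R] H}

namespace MixedCoassoc

lemma lTensor_secondaryBraiding_symm_comp_comulLeft (hσ : MixedCoassoc σ) :
    (secondaryBraiding σ.symm).lTensor H ∘ₗ comulLeft R H H =
      rTensorAssoc H σ.toLinearMap ∘ₗ comul.lTensor H ∘ₗ σ.symm.toLinearMap :=
  calc (secondaryBraiding σ.symm).lTensor H ∘ₗ comulLeft R H H
    _ = ((sliceRight H counit).lTensor H).lTensor H ∘ₗ (σ.toLinearMap.lTensor H).lTensor H ∘ₗ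
          (comulLeft R H H).lTensor H ∘ₗ σ.symm.toLinearMap.lTensor H ∘ₗ comulLeft R H H := by
      simp only [secondaryBraiding, lTensor_comp, comp_assoc, LinearEquiv.symm_symm]
    _ = (((sliceRight H counit).lTensor H).lTensor H ∘ₗ
          rTensorAssoc (H ⊗[R] H) σ.toLinearMap) ∘ₗ (comulLeft R H H).lTensor H ∘ₗ
            rTensorAssoc H σ.symm.toLinearMap ∘ₗ comul.lTensor H := by
      rw [← hσ, comp_assoc]
    _ = rTensorAssoc H σ.toLinearMap ∘ₗ
          ((sliceRight H counit).lTensor H ∘ₗ comulLeft R H H).lTensor H ∘ₗ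
            rTensorAssoc H σ.symm.toLinearMap ∘ₗ comul.lTensor H := by
      rw [← rTensorAssoc_comp_lTensor_lTensor, lTensor_comp]
      rfl
    _ = rTensorAssoc H σ.toLinearMap ∘ₗ comul.lTensor H ∘ₗ
          ((sliceRight H counit).lTensor H ∘ₗ rTensorAssoc H σ.symm.toLinearMap) ∘ₗ
            comul.lTensor H := by
      rw [lTensor_sliceRight_comp_comulLeft, lTensor_comp]
      rfl
    _ = rTensorAssoc H σ.toLinearMap ∘ₗ comul.lTensor H ∘ₗ σ.symm.toLinearMap ∘ₗ
          (sliceRight H counit ∘ₗ comul).lTensor H := by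
      rw [← comp_lTensor_sliceRight, lTensor_comp]
      rfl
    _ = rTensorAssoc H σ.toLinearMap ∘ₗ comul.lTensor H ∘ₗ σ.symm.toLinearMap := by
      rw [sliceRight_counit_comp_comul, lTensor_id, comp_id]

lemma secondaryBraiding_symm_eq (hσ : MixedCoassoc σ) :
    secondaryBraiding σ.symm =
      sliceLeft (H ⊗[R] H) counit ∘ₗ rTensorAssoc H σ.toLinearMap ∘ₗ comul.lTensor H ∘ₗ
        σ.symm.toLinearMap := by
  rw [← hσ.lTensor_secondaryBraiding_symm_comp_comulLeft, ← comp_assoc, sliceLeft_comp_lTensor,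
    comp_assoc, sliceLeft_counit_comp_comulLeft, comp_id]

lemma rTensorAssoc_secondaryBraiding_symm_comp (hσ : MixedCoassoc σ) :
    rTensorAssoc X (secondaryBraiding σ.symm) ∘ₗ rTensorAssoc X σ.toLinearMap =
      sliceLeft (H ⊗[R] (H ⊗[R] X)) counit ∘ₗ rTensorAssoc (H ⊗[R] X) σ.toLinearMap ∘ₗ
        (comulLeft R H X).lTensor H := by
  have h : secondaryBraiding σ.symm ∘ₗ σ.toLinearMap =
      sliceLeft (H ⊗[R] H) counit ∘ₗ rTensorAssoc H σ.toLinearMap ∘ₗ comul.lTensor H := by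
    simp_rw [hσ.secondaryBraiding_symm_eq, comp_assoc, LinearEquiv.symm_comp, comp_id]
  rw [← rTensorAssoc_comp, h, rTensorAssoc_sliceLeft_comp, rTensorAssoc_comp,
    ← lTensor_assoc_comp_rTensorAssoc_lTensor_comul,
    ← comp_assoc (rTensorAssoc X _), lTensor_assoc_comp_rTensorAssoc_rTensorAssoc, comp_assoc]

lemma rTensorAssoc_secondaryBraiding_symm_comp_lTensor_comul (hσ : MixedCoassoc σ) :
    rTensorAssoc H (secondaryBraiding σ.symm) ∘ₗ comul.lTensor H =
      σ.toLinearMap.lTensor H ∘ₗ comulLeft R H H ∘ₗ σ.symm.toLinearMap :=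
  calc rTensorAssoc H (secondaryBraiding σ.symm) ∘ₗ comul.lTensor H
    _ = (rTensorAssoc H (secondaryBraiding σ.symm) ∘ₗ rTensorAssoc H σ.toLinearMap) ∘ₗ
          rTensorAssoc H σ.symm.toLinearMap ∘ₗ comul.lTensor H := by
      rw [comp_assoc, ← comp_assoc _ _ (rTensorAssoc H σ.toLinearMap), ← rTensorAssoc_comp,
        LinearEquiv.comp_symm, rTensorAssoc_id, id_comp]
    _ = sliceLeft (H ⊗[R] (H ⊗[R] H)) counit ∘ₗ (σ.toLinearMap.lTensor H).lTensor H ∘ₗ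
          (comulLeft R H H).lTensor H ∘ₗ σ.symm.toLinearMap.lTensor H ∘ₗ comulLeft R H H := by
      rw [hσ.rTensorAssoc_secondaryBraiding_symm_comp, ← hσ]
      rfl
    _ = sliceLeft (H ⊗[R] (H ⊗[R] H)) counit ∘ₗ
          (σ.toLinearMap.lTensor H ∘ₗ comulLeft R H H ∘ₗ σ.symm.toLinearMap).lTensor H ∘ₗ
            comulLeft R H H := by
      simp only [lTensor_comp, comp_assoc]
    _ = σ.toLinearMap.lTensor H ∘ₗ comulLeft R H H ∘ₗ σ.symm.toLinearMap := by
      rw [← comp_assoc, sliceLeft_comp_lTensor, comp_assoc, sliceLeft_counit_comp_comulLeft,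
        comp_id]

lemma comulLeft_comp_secondaryBraiding_symm (hσ : MixedCoassoc σ) :
    comulLeft R H H ∘ₗ secondaryBraiding σ.symm =
      (secondaryBraiding σ.symm).lTensor H ∘ₗ
        rTensorAssoc H (secondaryBraiding σ.symm) ∘ₗ comul.lTensor H := by
  rw [hσ.rTensorAssoc_secondaryBraiding_symm_comp_lTensor_comul]
  symm
  calc (secondaryBraiding σ.symm).lTensor H ∘ₗ σ.toLinearMap.lTensor H ∘ₗ comulLeft R H H ∘ₗ
        σ.symm.toLinearMap
    _ = ((sliceRight H counit).lTensor H ∘ₗ σ.toLinearMap.lTensor H ∘ₗ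
          comulLeft R H H).lTensor H ∘ₗ comulLeft R H H ∘ₗ σ.symm.toLinearMap := by
      rw [← comp_assoc, ← lTensor_comp, secondaryBraiding]
      simp only [comp_assoc, LinearEquiv.symm_symm, LinearEquiv.symm_comp, comp_id]
    _ = (((sliceRight H counit).lTensor H ∘ₗ σ.toLinearMap.lTensor H).lTensor H ∘ₗ
          comulLeft R H (H ⊗[R] H)) ∘ₗ comulLeft R H H ∘ₗ σ.symm.toLinearMap := by
      rw [comp_assoc, ← comp_assoc _ _ (comulLeft R H _), comulLeft_comp_comulLeft]
      simp only [lTensor_comp, comp_assoc]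
    _ = comulLeft R H H ∘ₗ secondaryBraiding σ.symm := by
      rw [← lTensor_comp, ← comulLeft_comp_lTensor, lTensor_comp]
      rfl

lemma lTensor_comul_comp_secondaryBraiding_symm (hσ : MixedCoassoc σ) :
    comul.lTensor H ∘ₗ secondaryBraiding σ.symm =
      rTensorAssoc H (secondaryBraiding σ.symm) ∘ₗ
        (secondaryBraiding σ.symm).lTensor H ∘ₗ comulLeft R H H := by
  symm
  calc rTensorAssoc H (secondaryBraiding σ.symm) ∘ₗ
        (secondaryBraiding σ.symm).lTensor H ∘ₗ comulLeft R H H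
    _ = sliceLeft (H ⊗[R] (H ⊗[R] H)) counit ∘ₗ rTensorAssoc (H ⊗[R] H) σ.toLinearMap ∘ₗ
          (comulLeft R H H ∘ₗ comul).lTensor H ∘ₗ σ.symm.toLinearMap := by
      rw [hσ.lTensor_secondaryBraiding_symm_comp_comulLeft, ← comp_assoc,
        hσ.rTensorAssoc_secondaryBraiding_symm_comp, lTensor_comp]
      rfl
    _ = sliceLeft (H ⊗[R] (H ⊗[R] H)) counit ∘ₗ (rTensorAssoc (H ⊗[R] H) σ.toLinearMap ∘ₗ
          (comul.lTensor H).lTensor H) ∘ₗ comul.lTensor H ∘ₗ σ.symm.toLinearMap := by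
      rw [comulLeft_comp_comul, lTensor_comp]
      rfl
    _ = comul.lTensor H ∘ₗ secondaryBraiding σ.symm := by
      rw [rTensorAssoc_comp_lTensor_lTensor, hσ.secondaryBraiding_symm_eq, comp_assoc,
        ← comp_assoc, sliceLeft_comp_lTensor, comp_assoc]

lemma comulLeft_comp_secondaryBraiding_symm_comp (hσ : MixedCoassoc σ) :
    comulLeft R H H ∘ₗ secondaryBraiding σ.symm ∘ₗ σ.toLinearMap =
      (secondaryBraiding σ.symm ∘ₗ σ.toLinearMap).lTensor H ∘ₗ comulLeft R H H := by
  rw [← comp_assoc, hσ.comulLeft_comp_secondaryBraiding_symm,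
    hσ.rTensorAssoc_secondaryBraiding_symm_comp_lTensor_comul]
  simp only [comp_assoc, lTensor_comp, LinearEquiv.symm_comp, comp_id]

lemma lTensor_comul_comp_secondaryBraiding_symm_comp (hσ : MixedCoassoc σ) :
    comul.lTensor H ∘ₗ secondaryBraiding σ.symm ∘ₗ σ.toLinearMap =
      rTensorAssoc H (secondaryBraiding σ.symm ∘ₗ σ.toLinearMap) ∘ₗ comul.lTensor H := by
  rw [← comp_assoc, hσ.lTensor_comul_comp_secondaryBraiding_symm,
    hσ.lTensor_secondaryBraiding_symm_comp_comulLeft, rTensorAssoc_comp]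
  simp only [comp_assoc, LinearEquiv.symm_comp, comp_id]

lemma rTensorAssoc_secondaryBraiding_symm_comp_lTensor_comulLeft (hσ : MixedCoassoc σ) :
    rTensorAssoc (H ⊗[R] X) (secondaryBraiding σ.symm) ∘ₗ (comulLeft R H X).lTensor H ∘ₗ
        rTensorAssoc X σ.toLinearMap =
      (rTensorAssoc X σ.toLinearMap).lTensor H ∘ₗ comulLeft R H (H ⊗[R] X) := by
  have h : rTensorAssoc H (secondaryBraiding σ.symm) ∘ₗ comul.lTensor H ∘ₗ σ.toLinearMap =
      σ.toLinearMap.lTensor H ∘ₗ comulLeft R H H := by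
    rw [← comp_assoc, hσ.rTensorAssoc_secondaryBraiding_symm_comp_lTensor_comul]
    simp only [comp_assoc, LinearEquiv.symm_comp, comp_id]
  calc rTensorAssoc (H ⊗[R] X) (secondaryBraiding σ.symm) ∘ₗ (comulLeft R H X).lTensor H ∘ₗ
        rTensorAssoc X σ.toLinearMap
    _ = (TensorProduct.assoc R H H X).toLinearMap.lTensor H ∘ₗ rTensorAssoc X
          (rTensorAssoc H (secondaryBraiding σ.symm) ∘ₗ comul.lTensor H ∘ₗ σ.toLinearMap) := by
      rw [rTensorAssoc_comp, rTensorAssoc_comp, ← comp_assoc _ (rTensorAssoc X _),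
        lTensor_assoc_comp_rTensorAssoc_rTensorAssoc,
        ← lTensor_assoc_comp_rTensorAssoc_lTensor_comul]
      rfl
    _ = (rTensorAssoc X σ.toLinearMap).lTensor H ∘ₗ
          (TensorProduct.assoc R H H X).toLinearMap.lTensor H ∘ₗ
            rTensorAssoc X (comulLeft R H H) := by
      rw [h, rTensorAssoc_comp, rTensorAssoc_lTensor, ← comp_assoc, ← comp_assoc, ← lTensor_comp,
        ← lTensor_comp]
      congr 2
      simp only [rTensorAssoc, coassoc_simps]
    _ = (rTensorAssoc X σ.toLinearMap).lTensor H ∘ₗ comulLeft R H (H ⊗[R] X) := by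
      rw [lTensor_assoc_comp_rTensorAssoc_comulLeft]

end MixedCoassoc

/-- The endomorphism `a ⊗ y ↦ a₁ ⊗ b(a₂ ⊗ y₁) y₂` of `H ⊗ H` given by a bilinear form `b`,
which inverts `τ⁻¹σ` when `b = εm`. -/
def formConv (b : H ⊗[R] H →ₗ[R] R) : H ⊗[R] H →ₗ[R] H ⊗[R] H :=
  (sliceLeft H b ∘ₗ (TensorProduct.assoc R H H H).symm.toLinearMap ∘ₗ comul.lTensor H).lTensor H ∘ₗ
    comulLeft R H H

/-- A bilinear form `b` with `(id⊗b)(σ⊗id)(id⊗φ) = ε⊗id`, such as `b = ε⊗ε` when `σ` is the flip,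
and `b = εm` in a braided quantum group. -/
def IsTwistedCounit (σ : H ⊗[R] H ≃ₗ[R] H ⊗[R] H) (b : H ⊗[R] H →ₗ[R] R) : Prop :=
  sliceRight H b ∘ₗ rTensorAssoc H σ.toLinearMap ∘ₗ comul.lTensor H = sliceLeft H counit

lemma sliceRight_counit_comp_formConv (b : H ⊗[R] H →ₗ[R] R) :
    sliceRight H counit ∘ₗ formConv b = sliceRight H b ∘ₗ comulLeft R H H := by
  have h : counit ∘ₗ sliceLeft H b ∘ₗ (TensorProduct.assoc R H H H).symm.toLinearMap ∘ₗ
      comul.lTensor H = b := by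
    rw [← comp_assoc, comp_sliceLeft, comp_assoc, ← comp_assoc _ _ (sliceRight _ _),
      sliceRight_comp_assoc_symm, ← lTensor_comp, sliceRight_counit_comp_comul, lTensor_id, comp_id]
  rw [formConv, ← comp_assoc, sliceRight_comp_lTensor, h]

namespace MixedCoassoc

variable {b : H ⊗[R] H →ₗ[R] R}

lemma form_comp_secondaryBraiding_symm_comp (hσ : MixedCoassoc σ) (hb : IsTwistedCounit σ b) :
    b ∘ₗ secondaryBraiding σ.symm ∘ₗ σ.toLinearMap = counit ∘ₗ sliceLeft H counit := by
  simp only [hσ.secondaryBraiding_symm_eq, comp_assoc, LinearEquiv.symm_comp, comp_id]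
  rw [← comp_assoc, comp_sliceLeft, comp_assoc, hb]

lemma formConv_comp_secondaryBraiding_symm (hσ : MixedCoassoc σ) (hb : IsTwistedCounit σ b) :
    formConv b ∘ₗ secondaryBraiding σ.symm = σ.symm.toLinearMap := by
  set Q := secondaryBraiding σ.symm ∘ₗ σ.toLinearMap with hQ
  have slice_comp : (sliceLeft H b ∘ₗ (TensorProduct.assoc R H H H).symm.toLinearMap ∘ₗ
      comul.lTensor H) ∘ₗ Q = sliceLeft H counit :=
    calc (sliceLeft H b ∘ₗ (TensorProduct.assoc R H H H).symm.toLinearMap ∘ₗ comul.lTensor H) ∘ₗ Q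
      _ = sliceLeft H (b ∘ₗ Q) ∘ₗ (TensorProduct.assoc R H H H).symm.toLinearMap ∘ₗ
            comul.lTensor H := by
        rw [comp_assoc, comp_assoc, hσ.lTensor_comul_comp_secondaryBraiding_symm_comp,
          ← comp_assoc _ _ (sliceLeft H (b ∘ₗ Q)),
          ← sliceLeft_comp_assoc_symm_comp_rTensorAssoc]
        rfl
      _ = sliceLeft H counit ∘ₗ (sliceLeft H counit ∘ₗ comul).lTensor H := by
        rw [hQ, hσ.form_comp_secondaryBraiding_symm_comp hb, ← comp_assoc,
          sliceLeft_comp_sliceLeft_comp_assoc_symm, lTensor_comp, comp_assoc]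
      _ = sliceLeft H counit := by
        rw [sliceLeft_counit_comp_comul, lTensor_id, comp_id]
  have formConv_comp : formConv b ∘ₗ Q = LinearMap.id := by
    rw [formConv, comp_assoc, hσ.comulLeft_comp_secondaryBraiding_symm_comp, ← comp_assoc,
      ← lTensor_comp, slice_comp, lTensor_sliceLeft_counit_comp_comulLeft]
  calc formConv b ∘ₗ secondaryBraiding σ.symm
    _ = (formConv b ∘ₗ Q) ∘ₗ σ.symm.toLinearMap := by
      simp only [hQ, comp_assoc, LinearEquiv.comp_symm, comp_id]
    _ = σ.symm.toLinearMap := by rw [formConv_comp, id_comp]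

lemma secondaryBraiding_eq (hσ : MixedCoassoc σ) (hb : IsTwistedCounit σ b) :
    secondaryBraiding σ =
      (sliceRight H b ∘ₗ comulLeft R H H).lTensor H ∘ₗ rTensorAssoc H σ.toLinearMap ∘ₗ
        comul.lTensor H :=
  calc secondaryBraiding σ
    _ = (sliceRight H counit ∘ₗ formConv b).lTensor H ∘ₗ
          ((secondaryBraiding σ.symm).lTensor H ∘ₗ comulLeft R H H) ∘ₗ σ.toLinearMap := by
      rw [secondaryBraiding, ← hσ.formConv_comp_secondaryBraiding_symm hb]
      simp only [lTensor_comp, comp_assoc]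
    _ = (sliceRight H b ∘ₗ comulLeft R H H).lTensor H ∘ₗ rTensorAssoc H σ.toLinearMap ∘ₗ
          comul.lTensor H := by
      rw [sliceRight_counit_comp_formConv, hσ.lTensor_secondaryBraiding_symm_comp_comulLeft]
      simp only [comp_assoc, LinearEquiv.symm_comp, comp_id]

lemma secondaryBraiding_symm_comp_secondaryBraiding
    (hσ : MixedCoassoc σ) (hb : IsTwistedCounit σ b) :
    secondaryBraiding σ.symm ∘ₗ secondaryBraiding σ = LinearMap.id :=
  calc secondaryBraiding σ.symm ∘ₗ secondaryBraiding σ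
    _ = (secondaryBraiding σ.symm ∘ₗ (sliceRight H b).lTensor H) ∘ₗ
          (comulLeft R H H).lTensor H ∘ₗ rTensorAssoc H σ.toLinearMap ∘ₗ comul.lTensor H := by
      rw [hσ.secondaryBraiding_eq hb, lTensor_comp]
      rfl
    _ = (sliceRight H b).lTensor H ∘ₗ (rTensorAssoc (H ⊗[R] H) (secondaryBraiding σ.symm) ∘ₗ
          (comulLeft R H H).lTensor H ∘ₗ rTensorAssoc H σ.toLinearMap) ∘ₗ comul.lTensor H := by
      rw [comp_lTensor_sliceRight]
      rfl
    _ = (sliceRight H b ∘ₗ rTensorAssoc H σ.toLinearMap ∘ₗ comul.lTensor H).lTensor H ∘ₗ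
          comulLeft R H H := by
      rw [hσ.rTensorAssoc_secondaryBraiding_symm_comp_lTensor_comulLeft, comp_assoc,
        comulLeft_comp_lTensor]
      simp only [lTensor_comp, comp_assoc]
    _ = LinearMap.id := by rw [hb, lTensor_sliceLeft_counit_comp_comulLeft]

lemma secondaryBraiding_comp_secondaryBraiding_symm
    (hσ : MixedCoassoc σ) (hb : IsTwistedCounit σ b) :
    secondaryBraiding σ ∘ₗ secondaryBraiding σ.symm = LinearMap.id := by
  have left_inv : (σ.toLinearMap ∘ₗ formConv b) ∘ₗ secondaryBraiding σ.symm = LinearMap.id := by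
    rw [comp_assoc, hσ.formConv_comp_secondaryBraiding_symm hb, LinearEquiv.comp_symm]
  rwa [left_inv_eq_right_inv left_inv
    (hσ.secondaryBraiding_symm_comp_secondaryBraiding hb)] at left_inv

lemma comulLeft_comp_secondaryBraiding (hσ : MixedCoassoc σ) (hb : IsTwistedCounit σ b) :
    comulLeft R H H ∘ₗ secondaryBraiding σ =
      (secondaryBraiding σ).lTensor H ∘ₗ rTensorAssoc H (secondaryBraiding σ) ∘ₗ
        comul.lTensor H := by
  symm
  calc (secondaryBraiding σ).lTensor H ∘ₗ rTensorAssoc H (secondaryBraiding σ) ∘ₗ comul.lTensor H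
    _ = (secondaryBraiding σ).lTensor H ∘ₗ rTensorAssoc H (secondaryBraiding σ) ∘ₗ
          (comul.lTensor H ∘ₗ secondaryBraiding σ.symm) ∘ₗ secondaryBraiding σ := by
      rw [comp_assoc, hσ.secondaryBraiding_symm_comp_secondaryBraiding hb, comp_id]
    _ = (secondaryBraiding σ).lTensor H ∘ₗ
          rTensorAssoc H (secondaryBraiding σ ∘ₗ secondaryBraiding σ.symm) ∘ₗ
            (secondaryBraiding σ.symm).lTensor H ∘ₗ comulLeft R H H ∘ₗ secondaryBraiding σ := by
      rw [hσ.lTensor_comul_comp_secondaryBraiding_symm, rTensorAssoc_comp]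
      rfl
    _ = (secondaryBraiding σ ∘ₗ secondaryBraiding σ.symm).lTensor H ∘ₗ
          comulLeft R H H ∘ₗ secondaryBraiding σ := by
      rw [hσ.secondaryBraiding_comp_secondaryBraiding_symm hb, rTensorAssoc_id, id_comp,
        ← comp_assoc, ← lTensor_comp, hσ.secondaryBraiding_comp_secondaryBraiding_symm hb]
    _ = comulLeft R H H ∘ₗ secondaryBraiding σ := by
      rw [hσ.secondaryBraiding_comp_secondaryBraiding_symm hb, lTensor_id, id_comp]

lemma lTensor_comul_comp_secondaryBraiding (hσ : MixedCoassoc σ) (hb : IsTwistedCounit σ b) :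
    comul.lTensor H ∘ₗ secondaryBraiding σ =
      rTensorAssoc H (secondaryBraiding σ) ∘ₗ (secondaryBraiding σ).lTensor H ∘ₗ
        comulLeft R H H := by
  symm
  calc rTensorAssoc H (secondaryBraiding σ) ∘ₗ (secondaryBraiding σ).lTensor H ∘ₗ comulLeft R H H
    _ = rTensorAssoc H (secondaryBraiding σ) ∘ₗ (secondaryBraiding σ).lTensor H ∘ₗ
          (comulLeft R H H ∘ₗ secondaryBraiding σ.symm) ∘ₗ secondaryBraiding σ := by
      rw [comp_assoc, hσ.secondaryBraiding_symm_comp_secondaryBraiding hb, comp_id]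
    _ = rTensorAssoc H (secondaryBraiding σ) ∘ₗ
          (secondaryBraiding σ ∘ₗ secondaryBraiding σ.symm).lTensor H ∘ₗ
            rTensorAssoc H (secondaryBraiding σ.symm) ∘ₗ comul.lTensor H ∘ₗ
              secondaryBraiding σ := by
      rw [hσ.comulLeft_comp_secondaryBraiding_symm, lTensor_comp]
      rfl
    _ = rTensorAssoc H (secondaryBraiding σ ∘ₗ secondaryBraiding σ.symm) ∘ₗ
          comul.lTensor H ∘ₗ secondaryBraiding σ := by
      rw [hσ.secondaryBraiding_comp_secondaryBraiding_symm hb, lTensor_id, id_comp,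
        ← comp_assoc, ← rTensorAssoc_comp, hσ.secondaryBraiding_comp_secondaryBraiding_symm hb]
    _ = comul.lTensor H ∘ₗ secondaryBraiding σ := by
      rw [hσ.secondaryBraiding_comp_secondaryBraiding_symm hb, rTensorAssoc_id, id_comp]

end MixedCoassoc

end Comul

section Algebra

open Coalgebra

variable {R H X : Type*} [CommSemiring R] [Semiring H] [Algebra R H] [Coalgebra R H]
  [AddCommMonoid X] [Module R X] {σ : H ⊗[R] H ≃ₗ[R] H ⊗[R] H} {κ : H →ₗ[R] H}

/-- The axiom `φm = (m⊗m)(id⊗σ⊗id)(φ⊗φ)`: the coproduct is multiplicative for the product of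
`H ⊗ H` twisted by the braiding `σ`. -/
def IsBraidedMul (σ : H ⊗[R] H ≃ₗ[R] H ⊗[R] H) : Prop :=
  comul ∘ₗ mul' R H =
    ((mul' R H).rTensor H ∘ₗ (TensorProduct.assoc R H H H).symm.toLinearMap) ∘ₗ
      ((mul' R H).lTensor H).lTensor H ∘ₗ (rTensorAssoc H σ.toLinearMap).lTensor H ∘ₗ
        comulLeft R H (H ⊗[R] H) ∘ₗ comul.lTensor H

lemma mul'_comp_rTensor_comp_lTensor_mul'_comp_comulLeft
    (hκ : mul' R H ∘ₗ κ.rTensor H ∘ₗ comul = Algebra.linearMap R H ∘ₗ counit) :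
    mul' R H ∘ₗ κ.rTensor H ∘ₗ (mul' R H).lTensor H ∘ₗ comulLeft R H H = sliceLeft H counit := by
  have mul'_assoc : mul' R H ∘ₗ κ.rTensor H ∘ₗ (mul' R H).lTensor H ∘ₗ
      (TensorProduct.assoc R H H H).toLinearMap =
        mul' R H ∘ₗ (mul' R H).rTensor H ∘ₗ (κ.rTensor H).rTensor H := by
    ext
    simp [mul_assoc]
  calc mul' R H ∘ₗ κ.rTensor H ∘ₗ (mul' R H).lTensor H ∘ₗ comulLeft R H H
    _ = (mul' R H ∘ₗ κ.rTensor H ∘ₗ (mul' R H).lTensor H ∘ₗ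
          (TensorProduct.assoc R H H H).toLinearMap) ∘ₗ comul.rTensor H := rfl
    _ = mul' R H ∘ₗ (mul' R H ∘ₗ κ.rTensor H ∘ₗ comul).rTensor H := by
      rw [mul'_assoc]
      simp only [rTensor_comp, comp_assoc]
    _ = sliceLeft H counit := by
      rw [hκ]
      ext
      simp [sliceLeft, Algebra.smul_def]

lemma mul'_comp_rTensor_comp_lTensor_cancel
    (hκ : mul' R H ∘ₗ κ.rTensor H ∘ₗ comul = Algebra.linearMap R H ∘ₗ counit)
    (F : H ⊗[R] X →ₗ[R] H) :
    mul' R H ∘ₗ κ.rTensor H ∘ₗ (mul' R H ∘ₗ F.lTensor H ∘ₗ comulLeft R H X).lTensor H ∘ₗ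
      comulLeft R H X = F :=
  calc mul' R H ∘ₗ κ.rTensor H ∘ₗ (mul' R H ∘ₗ F.lTensor H ∘ₗ comulLeft R H X).lTensor H ∘ₗ
        comulLeft R H X
    _ = mul' R H ∘ₗ κ.rTensor H ∘ₗ (mul' R H).lTensor H ∘ₗ ((F.lTensor H).lTensor H ∘ₗ
          comulLeft R H (H ⊗[R] X)) ∘ₗ comulLeft R H X := by
      rw [comp_assoc _ _ ((F.lTensor H).lTensor H), comulLeft_comp_comulLeft]
      simp only [lTensor_comp, comp_assoc]
    _ = (mul' R H ∘ₗ κ.rTensor H ∘ₗ (mul' R H).lTensor H ∘ₗ comulLeft R H H) ∘ₗ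
          F.lTensor H ∘ₗ comulLeft R H X := by
      rw [← comulLeft_comp_lTensor]
      rfl
    _ = F := by
      rw [mul'_comp_rTensor_comp_lTensor_mul'_comp_comulLeft hκ, ← comp_assoc,
        sliceLeft_comp_lTensor, comp_assoc, sliceLeft_counit_comp_comulLeft, comp_id]

lemma IsBraidedMul.mul'_eq (hm : IsBraidedMul σ) :
    mul' R H = mul' R H ∘ₗ (sliceRight H (counit ∘ₗ mul' R H) ∘ₗ rTensorAssoc H σ.toLinearMap ∘ₗ
      comul.lTensor H).lTensor H ∘ₗ comulLeft R H H :=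
  calc mul' R H
    _ = sliceRight H counit ∘ₗ comul ∘ₗ mul' R H := by
      rw [← comp_assoc, sliceRight_counit_comp_comul, id_comp]
    _ = (sliceRight H counit ∘ₗ (mul' R H).rTensor H) ∘ₗ
          (TensorProduct.assoc R H H H).symm.toLinearMap ∘ₗ ((mul' R H).lTensor H).lTensor H ∘ₗ
            (rTensorAssoc H σ.toLinearMap).lTensor H ∘ₗ comulLeft R H (H ⊗[R] H) ∘ₗ
              comul.lTensor H := by
      rw [hm]
      rfl
    _ = mul' R H ∘ₗ (sliceRight H counit ∘ₗ (mul' R H).lTensor H).lTensor H ∘ₗ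
          (rTensorAssoc H σ.toLinearMap).lTensor H ∘ₗ comulLeft R H (H ⊗[R] H) ∘ₗ
            comul.lTensor H := by
      rw [sliceRight_comp_rTensor, lTensor_comp, ← sliceRight_comp_assoc_symm]
      rfl
    _ = mul' R H ∘ₗ (sliceRight H (counit ∘ₗ mul' R H) ∘ₗ rTensorAssoc H σ.toLinearMap ∘ₗ
          comul.lTensor H).lTensor H ∘ₗ comulLeft R H H := by
      rw [sliceRight_comp_lTensor, comulLeft_comp_lTensor]
      simp only [lTensor_comp, comp_assoc]

lemma IsBraidedMul.isTwistedCounit (hm : IsBraidedMul σ)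
    (hκ : mul' R H ∘ₗ κ.rTensor H ∘ₗ comul = Algebra.linearMap R H ∘ₗ counit) :
    IsTwistedCounit σ (counit ∘ₗ mul' R H) := by
  rw [IsTwistedCounit, ← mul'_comp_rTensor_comp_lTensor_cancel hκ (sliceRight _ _ ∘ₗ _),
    ← hm.mul'_eq, mul'_comp_rTensor_comp_lTensor_mul'_comp_comulLeft hκ]

end Algebra

end BraidedCoalgebra

open BraidedCoalgebra Coalgebra in
theorem bqg_pentagon_tau_general {R H : Type*} [CommSemiring R] [Semiring H] [Algebra R H]
    [Coalgebra R H] (σ : H ⊗[R] H ≃ₗ[R] H ⊗[R] H) (κ : H →ₗ[R] H) (hσ : MixedCoassoc σ)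
    (hm : IsBraidedMul σ)
    (hκ : mul' R H ∘ₗ κ.rTensor H ∘ₗ comul = Algebra.linearMap R H ∘ₗ counit) :
    comulLeft R H H ∘ₗ secondaryBraiding σ =
        (secondaryBraiding σ).lTensor H ∘ₗ rTensorAssoc H (secondaryBraiding σ) ∘ₗ
          comul.lTensor H ∧
      comul.lTensor H ∘ₗ secondaryBraiding σ =
        rTensorAssoc H (secondaryBraiding σ) ∘ₗ (secondaryBraiding σ).lTensor H ∘ₗ
          comulLeft R H H :=
  have hb := hm.isTwistedCounit hκ
  ⟨hσ.comulLeft_comp_secondaryBraiding hb, hσ.lTensor_comul_comp_secondaryBraiding hb⟩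

namespace BQG

variable {A : Type*} [Ring A] [Algebra ℂ A] (G : BQG A)

/-- The coalgebra underlying a braided quantum group, not an instance because it depends on `G`. -/
abbrev coalgebra : Coalgebra ℂ A where
  comul := G.φ
  counit := G.ε
  coassoc := G.coassoc
  rTensor_counit_comp_comul := by
    ext a
    simpa using congrArg (TensorProduct.lid ℂ A).symm (LinearMap.congr_fun G.counit_left a)
  lTensor_counit_comp_comul := by
    ext a
    simpa using congrArg (TensorProduct.rid ℂ A).symm (LinearMap.congr_fun G.counit_right a)

/-- The braiding of a braided quantum group as a linear equivalence. -/
def braidingEquiv : A ⊗[ℂ] A ≃ₗ[ℂ] A ⊗[ℂ] A :=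
  .ofLinearMap G.σ G.σ' G.σ_comp G.comp_σ

end BQG

/-- Pentagonal relations for `τ` alone:
`(φ⊗id)τ = (id⊗τ)(τ⊗id)(id⊗φ)` and `(id⊗φ)τ = (τ⊗id)(id⊗τ)(φ⊗id)`. -/
theorem bqg_pentagon_tau {A : Type*} [Ring A] [Algebra ℂ A] (G : BQG A) :
    G.φ1 ∘ₗ G.τ = op23 G.τ ∘ₗ op12 G.τ ∘ₗ G.φ2 ∧
    G.φ2 ∘ₗ G.τ = op12 G.τ ∘ₗ op23 G.τ ∘ₗ G.φ1 :=
  letI := G.coalgebra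
  bqg_pentagon_tau_general G.braidingEquiv G.κ G.mixed_coassoc G.comul_mul G.antipode_left
end
end

section
/- In a braided quantum group, the secondary braiding τ satisfies the hexagon-type multiplication relations τ(m⊗id) = (id⊗τ)(τ⊗id)(id⊗m) and τ(id⊗m) = (τ⊗id)(id⊗τ)(m⊗id). -/
open TensorProduct LinearMap

noncomputable section

variable (A : Type*) [Ring A] [Algebra ℂ A]

variable {A}

/-!
Write `θ` for the secondary braiding of `σ⁻¹`. Mixed coassociativity and the counit axioms turn into
the pentagons `(σ ⊗ id)(id ⊗ φ)σ⁻¹ = (id ⊗ θ)(φ ⊗ id)` and `(id ⊗ σ)(φ ⊗ id)σ⁻¹ = (θ ⊗ id)(id ⊗ φ)`,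
through which the hexagons of `σ` and `σ⁻¹` pass to `θ`. The inverse of an operator satisfying the
hexagons satisfies them too, so it remains to see that `τ` and `θ` are mutually inverse.

Here the antipode enters: a linear map `g` on `A ⊗ V` is recovered from `(m ⊗ id)(id ⊗ g)(φ ⊗ id)`,
which together with multiplicativity of `φ` gives `(id ⊗ εm)(σ ⊗ id)(id ⊗ φ) = ε ⊗ id`. This
identity makes `(id ⊗ εm ⊗ id)(φ ⊗ φ)` a left inverse of `θσ`, and expresses `τ` without `σ⁻¹` as
`(id² ⊗ εm)(id ⊗ φ ⊗ id)(σ ⊗ id)(id ⊗ φ)`, from which `θτ = id` follows by the second pentagon.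
-/

section Head

variable {R A V W P : Type*} [CommSemiring R] [AddCommMonoid A] [Module R A]
  [AddCommMonoid V] [Module R V] [AddCommMonoid W] [Module R W] [AddCommMonoid P] [Module R P]

local prefix:max "◁" => LinearMap.lTensor A

/-- `f ⊗ id_W` for `f : A ⊗ A → A ⊗ A`, with right-nested tensor products. The four `head` operators
write an operator on tensor powers of `A` with an arbitrary tail `W`, so that `LinearMap.lTensor A`
shifts its position by one. -/
def head₂₂ (f : A ⊗[R] A →ₗ[R] A ⊗[R] A) : A ⊗[R] (A ⊗[R] W) →ₗ[R] A ⊗[R] (A ⊗[R] W) :=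
  (TensorProduct.assoc R A A W).toLinearMap ∘ₗ f.rTensor W ∘ₗ
    (TensorProduct.assoc R A A W).symm.toLinearMap

/-- `f ⊗ id_W` for `f : A ⊗ A → A`, with right-nested tensor products. -/
def head₂₁ (f : A ⊗[R] A →ₗ[R] A) : A ⊗[R] (A ⊗[R] W) →ₗ[R] A ⊗[R] W :=
  f.rTensor W ∘ₗ (TensorProduct.assoc R A A W).symm.toLinearMap

/-- `f ⊗ id_W` for `f : A → A ⊗ A`, with right-nested tensor products. -/
def head₁₂ (f : A →ₗ[R] A ⊗[R] A) : A ⊗[R] W →ₗ[R] A ⊗[R] (A ⊗[R] W) :=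
  (TensorProduct.assoc R A A W).toLinearMap ∘ₗ f.rTensor W

/-- `f ⊗ id_W` for `f : A → R`, with `R ⊗ W` identified with `W`. -/
def head₁₀ (f : A →ₗ[R] R) : A ⊗[R] W →ₗ[R] W :=
  (TensorProduct.lid R W).toLinearMap ∘ₗ f.rTensor W

variable (A) in
/-- The map `a ↦ a ⊗ w`, which appends the tail `w`. -/
def tail (w : W) : A →ₗ[R] A ⊗[R] W :=
  (TensorProduct.mk R A W).flip w

theorem lTensor_congr {f g : V →ₗ[R] W} (h : ∀ v, f v = g v) (x : A ⊗[R] V) : ◁f x = ◁g x := by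
  rw [LinearMap.ext h]

theorem lTensor_leftInverse {f : V →ₗ[R] W} {g : W →ₗ[R] V} (h : ∀ v, g (f v) = v)
    (x : A ⊗[R] V) : ◁g (◁f x) = x := by
  simpa only [lTensor_comp_apply, lTensor_id, id_apply] using
    lTensor_congr (f := g ∘ₗ f) (g := LinearMap.id) h x

theorem lTensor_square {V' : Type*} [AddCommMonoid V'] [Module R V'] {f : V →ₗ[R] W}
    {g : W →ₗ[R] P} {f' : V →ₗ[R] V'} {g' : V' →ₗ[R] P} (h : ∀ v, g (f v) = g' (f' v))
    (x : A ⊗[R] V) : ◁g (◁f x) = ◁g' (◁f' x) := by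
  simpa only [lTensor_comp_apply] using lTensor_congr (f := g ∘ₗ f) (g := g' ∘ₗ f') h x

theorem tail_apply (w : W) (a : A) : tail A w a = a ⊗ₜ[R] w :=
  rfl

theorem assoc_tmul_eq_lTensor_tail (t : A ⊗[R] A) (w : W) :
    TensorProduct.assoc R A A W (t ⊗ₜ w) = ◁(tail A w) t := by
  induction t with
  | zero => simp
  | tmul a b => rfl
  | add s t hs ht => simp only [add_tmul, map_add, hs, ht]

theorem assoc_symm_lTensor_tail (t : A ⊗[R] A) (w : W) :
    (TensorProduct.assoc R A A W).symm (◁(tail A w) t) = t ⊗ₜ w := by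
  rw [← assoc_tmul_eq_lTensor_tail, LinearEquiv.symm_apply_apply]

theorem lTensor_tail_one_injective : Function.Injective ◁(tail (R := R) A (1 : R)) := by
  have : tail A (1 : R) = (TensorProduct.rid R A).symm.toLinearMap := rfl
  rw [this]
  exact ((TensorProduct.rid R A).symm.lTensor A).injective

theorem ext_tail {f g : A ⊗[R] W →ₗ[R] P} (h : ∀ w a, f (tail A w a) = g (tail A w a))
    (x : A ⊗[R] W) : f x = g x :=
  LinearMap.congr_fun (TensorProduct.ext' fun a w => h w a) x

theorem ext_lTensor_tail {f g : A ⊗[R] (A ⊗[R] W) →ₗ[R] P}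
    (h : ∀ w t, f (◁(tail A w) t) = g (◁(tail A w) t)) (x : A ⊗[R] (A ⊗[R] W)) : f x = g x :=
  LinearMap.congr_fun (TensorProduct.ext_threefold' fun a b w => h w (a ⊗ₜ b)) x

theorem ext_lTensor_lTensor_tail {f g : A ⊗[R] (A ⊗[R] (A ⊗[R] W)) →ₗ[R] P}
    (h : ∀ w t, f (◁(◁(tail A w)) t) = g (◁(◁(tail A w)) t))
    (x : A ⊗[R] (A ⊗[R] (A ⊗[R] W))) : f x = g x := by
  suffices f = g from LinearMap.congr_fun this x
  ext a b c w
  exact h w (a ⊗ₜ (b ⊗ₜ c))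

section Tail

variable (w : W)

theorem head₂₂_tail (f : A ⊗[R] A →ₗ[R] A ⊗[R] A) (t : A ⊗[R] A) :
    head₂₂ f (◁(tail A w) t) = ◁(tail A w) (f t) := by
  simp [head₂₂, assoc_symm_lTensor_tail, assoc_tmul_eq_lTensor_tail]

theorem head₂₁_tail (f : A ⊗[R] A →ₗ[R] A) (t : A ⊗[R] A) :
    head₂₁ f (◁(tail A w) t) = tail A w (f t) := by
  simp [head₂₁, assoc_symm_lTensor_tail, tail_apply]

theorem head₁₂_tail (f : A →ₗ[R] A ⊗[R] A) (a : A) :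
    head₁₂ f (tail A w a) = ◁(tail A w) (f a) := by
  simp [head₁₂, assoc_tmul_eq_lTensor_tail, tail_apply]

theorem head₁₀_tail (f : A →ₗ[R] R) (a : A) :
    head₁₀ f (tail A w a) = toSpanSingleton R W w (f a) := by
  simp [head₁₀, tail_apply]

end Tail

section Naturality

variable (g : V →ₗ[R] W)

theorem assoc_lTensor (y : (A ⊗[R] A) ⊗[R] V) :
    TensorProduct.assoc R A A W (g.lTensor (A ⊗[R] A) y) =
      ◁(◁g) (TensorProduct.assoc R A A V y) := by
  simp [lTensor_tensor]

theorem assoc_symm_lTensor (x : A ⊗[R] (A ⊗[R] V)) :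
    (TensorProduct.assoc R A A W).symm (◁(◁g) x) =
      g.lTensor (A ⊗[R] A) ((TensorProduct.assoc R A A V).symm x) := by
  simp [lTensor_tensor]

theorem rTensor_lTensor_apply {M N : Type*} [AddCommMonoid M] [Module R M] [AddCommMonoid N]
    [Module R N] (f : M →ₗ[R] N) (y : M ⊗[R] V) :
    f.rTensor W (g.lTensor M y) = g.lTensor N (f.rTensor V y) := by
  simp only [← comp_apply, lTensor_comp_rTensor, rTensor_comp_lTensor]

theorem head₂₂_lTensor (f : A ⊗[R] A →ₗ[R] A ⊗[R] A) (x : A ⊗[R] (A ⊗[R] V)) :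
    head₂₂ f (◁(◁g) x) = ◁(◁g) (head₂₂ f x) := by
  simp only [head₂₂, comp_apply, LinearEquiv.coe_coe, assoc_symm_lTensor, rTensor_lTensor_apply,
    assoc_lTensor]

theorem head₂₁_lTensor (f : A ⊗[R] A →ₗ[R] A) (x : A ⊗[R] (A ⊗[R] V)) :
    head₂₁ f (◁(◁g) x) = ◁g (head₂₁ f x) := by
  simp only [head₂₁, comp_apply, LinearEquiv.coe_coe, assoc_symm_lTensor, rTensor_lTensor_apply]

theorem head₁₂_lTensor (f : A →ₗ[R] A ⊗[R] A) (x : A ⊗[R] V) :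
    head₁₂ f (◁g x) = ◁(◁g) (head₁₂ f x) := by
  simp only [head₁₂, comp_apply, LinearEquiv.coe_coe, rTensor_lTensor_apply, assoc_lTensor]

theorem head₁₀_lTensor (f : A →ₗ[R] R) (x : A ⊗[R] V) : head₁₀ f (◁g x) = g (head₁₀ f x) := by
  simp only [head₁₀, comp_apply, LinearEquiv.coe_coe, rTensor_lTensor_apply]
  induction f.rTensor V x with
  | zero => simp only [map_zero]
  | tmul r v => simp only [lTensor_tmul, TensorProduct.lid_tmul, map_smul]
  | add y z hy hz => simp only [map_add, hy, hz]

end Naturality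

theorem head₂₂_apply_head₂₂ {f g : A ⊗[R] A →ₗ[R] A ⊗[R] A} (h : f ∘ₗ g = LinearMap.id)
    (x : A ⊗[R] (A ⊗[R] W)) : head₂₂ f (head₂₂ g x) = x := by
  simp [head₂₂, ← rTensor_comp_apply, h]

theorem comp_eq_id_of_head₂₂ {f g : A ⊗[R] A →ₗ[R] A ⊗[R] A}
    (h : ∀ x : A ⊗[R] (A ⊗[R] R), head₂₂ f (head₂₂ g x) = x) : f ∘ₗ g = LinearMap.id := by
  refine LinearMap.ext fun t => lTensor_tail_one_injective ?_
  simpa only [comp_apply, head₂₂_tail, id_apply] using h (◁(tail A 1) t)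

end Head

section Coalgebra

variable {R A W : Type*} [CommSemiring R] [AddCommMonoid A] [Module R A] [Coalgebra R A]
  [AddCommMonoid W] [Module R W]

local prefix:max "◁" => LinearMap.lTensor A
local notation "φ" => head₁₂ (Coalgebra.comul (R := R) (A := A))
local notation "ε" => head₁₀ (Coalgebra.counit (R := R) (A := A))

theorem head_comul_comul (x : A ⊗[R] W) : φ (φ x) = ◁φ (φ x) := by
  refine ext_tail (f := φ ∘ₗ φ) (g := ◁φ ∘ₗ φ) (fun w a => ?_) x
  calc φ (φ (tail A w a))
    _ = ◁(◁(tail A w)) (head₁₂ Coalgebra.comul (Coalgebra.comul a)) := by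
      rw [head₁₂_tail, head₁₂_lTensor]
    _ = ◁(◁(tail A w)) (◁Coalgebra.comul (Coalgebra.comul a)) :=
      congrArg _ (Coalgebra.coassoc_apply a)
    _ = ◁φ (φ (tail A w a)) := by rw [head₁₂_tail, lTensor_square (head₁₂_tail w _)]

theorem head_counit_comul (x : A ⊗[R] W) : ε (φ x) = x := by
  refine ext_tail (f := ε ∘ₗ φ) (g := LinearMap.id) (fun w a => ?_) x
  calc ε (φ (tail A w a))
    _ = tail A w (ε (Coalgebra.comul a)) := by rw [head₁₂_tail, head₁₀_lTensor]
    _ = tail A w a := by simp [head₁₀]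

theorem lTensor_head_counit_comul (x : A ⊗[R] W) : ◁ε (φ x) = x := by
  refine ext_tail (f := ◁ε ∘ₗ φ) (g := LinearMap.id) (fun w a => ?_) x
  calc ◁ε (φ (tail A w a))
    _ = ◁(toSpanSingleton R W w) (◁Coalgebra.counit (Coalgebra.comul a)) := by
      rw [head₁₂_tail, lTensor_square (head₁₀_tail w _)]
    _ = tail A w a := by simp [tail_apply]

variable (b : A ⊗[R] A ≃ₗ[R] A ⊗[R] A)

/-- The secondary braiding `(id² ⊗ ε)(id ⊗ b⁻¹)(φ ⊗ id)b` of the braiding `b`. -/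
def secondaryBraiding : A ⊗[R] A →ₗ[R] A ⊗[R] A :=
  ◁((TensorProduct.rid R A).toLinearMap ∘ₗ ◁Coalgebra.counit) ∘ₗ ◁b.symm.toLinearMap ∘ₗ
    head₁₂ Coalgebra.comul ∘ₗ b.toLinearMap

local notation "σ" => head₂₂ (LinearEquiv.toLinearMap b)
local notation "σ⁻¹" => head₂₂ (LinearEquiv.toLinearMap (LinearEquiv.symm b))
local notation "τ" => head₂₂ (secondaryBraiding b)
local notation "θ" => head₂₂ (secondaryBraiding (LinearEquiv.symm b))

theorem tail_rid_lTensor_counit (w : W) (t : A ⊗[R] A) :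
    tail A w (((TensorProduct.rid R A).toLinearMap ∘ₗ ◁Coalgebra.counit) t) =
      ◁ε (◁(tail A w) t) := by
  rw [lTensor_square (head₁₀_tail w _), LinearMap.comp_apply]
  induction ◁Coalgebra.counit t with
  | zero => simp only [map_zero]
  | tmul a r => simp [tail_apply]
  | add s t hs ht => simp only [map_add, hs, ht]

theorem head₂₂_secondaryBraiding (x : A ⊗[R] (A ⊗[R] W)) : τ x = ◁(◁ε) (◁σ⁻¹ (φ (σ x))) := by
  refine ext_lTensor_tail (f := τ) (g := ◁(◁ε) ∘ₗ ◁σ⁻¹ ∘ₗ φ ∘ₗ σ) (fun w t => ?_) x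
  simp only [comp_apply, head₂₂_tail, head₁₂_lTensor, lTensor_square (head₂₂_tail w _),
    secondaryBraiding]
  rw [← lTensor_square (tail_rid_lTensor_counit w)]

theorem lTensor_head₂₂_secondaryBraiding (x : A ⊗[R] (A ⊗[R] (A ⊗[R] W))) :
    ◁τ x = ◁(◁(◁ε)) (◁(◁σ⁻¹) (◁φ (◁σ x))) := by
  simpa only [lTensor_comp_apply] using
    lTensor_congr (g := ◁(◁ε) ∘ₗ ◁σ⁻¹ ∘ₗ φ ∘ₗ σ) (head₂₂_secondaryBraiding b) x

theorem head_secondaryBraiding_symm_braid (x : A ⊗[R] (A ⊗[R] W)) :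
    θ (σ x) = ◁(◁ε) (◁σ (φ x)) := by
  rw [head₂₂_secondaryBraiding, LinearEquiv.symm_symm, head₂₂_apply_head₂₂ b.symm_comp]

theorem head_comul_secondaryBraiding_symm_braid (x : A ⊗[R] (A ⊗[R] W)) :
    φ (θ (σ x)) = ◁θ (◁σ (φ x)) := by
  have shift_unfold (y : A ⊗[R] (A ⊗[R] (A ⊗[R] W))) :
      ◁θ (◁σ y) = ◁(◁(◁ε)) (◁(◁σ) (◁φ y)) := by
    simpa only [lTensor_comp_apply] using lTensor_congr (f := θ ∘ₗ σ) (g := ◁(◁ε) ∘ₗ ◁σ ∘ₗ φ)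
      (head_secondaryBraiding_symm_braid b) y
  simp only [shift_unfold, ← head_comul_comul, ← head₁₂_lTensor,
    head_secondaryBraiding_symm_braid]

variable {b}

/-- Compatibility of the braiding `b` with the comultiplication `φ`:
`(b ⊗ id²)(id ⊗ φ ⊗ id)(b⁻¹ ⊗ id)(id ⊗ φ) = (id² ⊗ b)(id ⊗ φ ⊗ id)(id ⊗ b⁻¹)(φ ⊗ id)`. -/
def MixedCoassoc (b : A ⊗[R] A ≃ₗ[R] A ⊗[R] A) : Prop :=
  head₂₂ b.toLinearMap ∘ₗ ◁(head₁₂ Coalgebra.comul) ∘ₗ head₂₂ b.symm.toLinearMap ∘ₗ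
      ◁Coalgebra.comul =
    ◁(◁b.toLinearMap) ∘ₗ ◁(head₁₂ Coalgebra.comul) ∘ₗ ◁b.symm.toLinearMap ∘ₗ head₁₂ Coalgebra.comul

namespace MixedCoassoc

variable (h : MixedCoassoc b)
include h

theorem head_apply (x : A ⊗[R] (A ⊗[R] W)) :
    σ (◁φ (σ⁻¹ (◁φ x))) = ◁(◁σ) (◁φ (◁σ⁻¹ (φ x))) := by
  refine ext_lTensor_tail (f := σ ∘ₗ ◁φ ∘ₗ σ⁻¹ ∘ₗ ◁φ) (g := ◁(◁σ) ∘ₗ ◁φ ∘ₗ ◁σ⁻¹ ∘ₗ φ)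
    (fun w t => ?_) x
  have h_t := congrArg ◁(◁(◁(tail A w))) (LinearMap.congr_fun h t)
  simpa only [comp_apply, head₂₂_lTensor, head₁₂_lTensor, lTensor_square (head₁₂_tail w _),
    lTensor_square (head₂₂_tail w _), lTensor_square (lTensor_square (head₂₂_tail w _)),
    lTensor_square (head₁₂_lTensor (tail A w) _)] using h_t

theorem pentagon_left (x : A ⊗[R] (A ⊗[R] W)) : σ (◁φ (σ⁻¹ x)) = ◁θ (φ x) := by
  calc σ (◁φ (σ⁻¹ x))
    _ = σ (◁φ (σ⁻¹ (◁(◁ε) (◁φ x)))) := by rw [lTensor_leftInverse lTensor_head_counit_comul]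
    _ = ◁(◁(◁ε)) (σ (◁φ (σ⁻¹ (◁φ x)))) := by
      simp only [head₂₂_lTensor, lTensor_square (head₁₂_lTensor ε _)]
    _ = ◁(◁(◁ε)) (◁(◁σ) (◁φ (◁σ⁻¹ (φ x)))) := by rw [h.head_apply]
    _ = ◁θ (φ x) := (lTensor_head₂₂_secondaryBraiding b.symm _).symm

theorem head_secondaryBraiding_symm (x : A ⊗[R] (A ⊗[R] W)) : θ x = ε (σ (◁φ (σ⁻¹ x))) := by
  rw [h.pentagon_left, head₁₀_lTensor, head_counit_comul]

theorem head_secondaryBraiding_symm_braid (x : A ⊗[R] (A ⊗[R] W)) :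
    θ (σ x) = ε (σ (◁φ x)) := by
  rw [h.head_secondaryBraiding_symm, head₂₂_apply_head₂₂ b.symm_comp]

theorem lTensor_comul_secondaryBraiding_symm_braid (x : A ⊗[R] (A ⊗[R] W)) :
    ◁φ (θ (σ x)) = θ (σ (◁φ x)) := by
  rw [h.head_secondaryBraiding_symm_braid, h.head_secondaryBraiding_symm_braid,
    lTensor_square head_comul_comul, head₂₂_lTensor, head₁₀_lTensor]

theorem pentagon_right (x : A ⊗[R] (A ⊗[R] W)) : ◁σ (φ (σ⁻¹ x)) = θ (◁φ x) := by
  calc ◁σ (φ (σ⁻¹ x))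
    _ = ε (◁(◁σ) (◁φ (◁σ⁻¹ (φ x)))) := by
      simp only [head₁₀_lTensor, head_counit_comul]
    _ = ε (σ (◁φ (σ⁻¹ (◁φ x)))) := by rw [h.head_apply]
    _ = θ (◁φ x) := (h.head_secondaryBraiding_symm _).symm

end MixedCoassoc

end Coalgebra

section Algebra

variable {R A W : Type*} [CommSemiring R] [Semiring A] [Algebra R A] [AddCommMonoid W] [Module R W]

local prefix:max "◁" => LinearMap.lTensor A
local notation "μ" => head₂₁ (LinearMap.mul' R A)

/-- The hexagon relations `s(m ⊗ id) = (id ⊗ m)(s ⊗ id)(id ⊗ s)` and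
`s(id ⊗ m) = (m ⊗ id)(id ⊗ s)(s ⊗ id)` of an operator `s` on `A ⊗ A` with the multiplication. -/
structure IsMulBraiding (s : A ⊗[R] A →ₗ[R] A ⊗[R] A) : Prop where
  comp_mul_left : s ∘ₗ μ = ◁(LinearMap.mul' R A) ∘ₗ head₂₂ s ∘ₗ ◁s
  comp_mul_right : s ∘ₗ ◁(LinearMap.mul' R A) = μ ∘ₗ ◁s ∘ₗ head₂₂ s

theorem head_mul_mul (x : A ⊗[R] (A ⊗[R] (A ⊗[R] W))) : μ (μ x) = μ (◁μ x) := by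
  suffices μ ∘ₗ μ = μ ∘ₗ ◁μ from LinearMap.congr_fun this x
  ext a b c w
  simp [head₂₁, mul_assoc]

theorem head_mul_one_tmul (x : A ⊗[R] W) : μ ((1 : A) ⊗ₜ x) = x := by
  suffices μ ∘ₗ TensorProduct.mk R A _ 1 = LinearMap.id from LinearMap.congr_fun this x
  ext a w
  simp [head₂₁]

namespace IsMulBraiding

variable {s t : A ⊗[R] A →ₗ[R] A ⊗[R] A}

theorem of_inverse (h : IsMulBraiding s) (hst : s ∘ₗ t = LinearMap.id)
    (hts : t ∘ₗ s = LinearMap.id) : IsMulBraiding t := by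
  have shift_hst (x : A ⊗[R] (A ⊗[R] A)) : ◁s (◁t x) = x :=
    lTensor_leftInverse (LinearMap.congr_fun hst) x
  constructor <;> refine LinearMap.ext fun x => ?_
  · calc t (μ x)
      _ = t (μ (◁s (head₂₂ s (head₂₂ t (◁t x))))) := by
        rw [head₂₂_apply_head₂₂ hst, shift_hst]
      _ = t (s (◁(LinearMap.mul' R A) (head₂₂ t (◁t x)))) :=
        congrArg t (LinearMap.congr_fun h.comp_mul_right _).symm
      _ = ◁(LinearMap.mul' R A) (head₂₂ t (◁t x)) := LinearMap.congr_fun hts _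
  · calc t (◁(LinearMap.mul' R A) x)
      _ = t (◁(LinearMap.mul' R A) (head₂₂ s (◁s (◁t (head₂₂ t x))))) := by
        rw [shift_hst, head₂₂_apply_head₂₂ hst]
      _ = t (s (μ (◁t (head₂₂ t x)))) :=
        congrArg t (LinearMap.congr_fun h.comp_mul_left _).symm
      _ = μ (◁t (head₂₂ t x)) := LinearMap.congr_fun hts _

theorem head_mul_left (h : IsMulBraiding s) (x : A ⊗[R] (A ⊗[R] (A ⊗[R] W))) :
    head₂₂ s (μ x) = ◁μ (head₂₂ s (◁(head₂₂ s) x)) := by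
  refine ext_lTensor_lTensor_tail (f := head₂₂ s ∘ₗ μ)
    (g := ◁μ ∘ₗ head₂₂ s ∘ₗ ◁(head₂₂ s)) (fun w t => ?_) x
  have h_t := congrArg ◁(tail A w) (LinearMap.congr_fun h.comp_mul_left t)
  simpa only [comp_apply, head₂₂_lTensor, head₂₁_lTensor, head₂₂_tail,
    lTensor_square (head₂₁_tail w _), lTensor_square (head₂₂_tail w _)] using h_t

theorem head_mul_right (h : IsMulBraiding s) (x : A ⊗[R] (A ⊗[R] (A ⊗[R] W))) :
    head₂₂ s (◁μ x) = μ (◁(head₂₂ s) (head₂₂ s x)) := by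
  refine ext_lTensor_lTensor_tail (f := head₂₂ s ∘ₗ ◁μ)
    (g := μ ∘ₗ ◁(head₂₂ s) ∘ₗ head₂₂ s) (fun w t => ?_) x
  have h_t := congrArg ◁(tail A w) (LinearMap.congr_fun h.comp_mul_right t)
  simpa only [comp_apply, head₂₂_lTensor, head₂₁_lTensor, head₂₂_tail,
    lTensor_square (head₂₁_tail w _), lTensor_square (head₂₂_tail w _)] using h_t

theorem of_head
    (h_left : ∀ x : A ⊗[R] (A ⊗[R] (A ⊗[R] R)), head₂₂ s (μ x) = ◁μ (head₂₂ s (◁(head₂₂ s) x)))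
    (h_right : ∀ x : A ⊗[R] (A ⊗[R] (A ⊗[R] R)), head₂₂ s (◁μ x) = μ (◁(head₂₂ s) (head₂₂ s x))) :
    IsMulBraiding s := by
  constructor <;> refine LinearMap.ext fun t => lTensor_tail_one_injective ?_
  · simpa only [comp_apply, head₂₂_lTensor, head₂₁_lTensor, head₂₂_tail,
      lTensor_square (head₂₁_tail (1 : R) _), lTensor_square (head₂₂_tail (1 : R) _)] using
      h_left (◁(◁(tail A 1)) t)
  · simpa only [comp_apply, head₂₂_lTensor, head₂₁_lTensor, head₂₂_tail,
      lTensor_square (head₂₁_tail (1 : R) _), lTensor_square (head₂₂_tail (1 : R) _)] using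
      h_right (◁(◁(tail A 1)) t)

end IsMulBraiding

end Algebra

section BraidedHopf

variable {R A V W : Type*} [CommSemiring R] [Semiring A] [Algebra R A] [Coalgebra R A]
  [AddCommMonoid V] [Module R V] [AddCommMonoid W] [Module R W]
  {b : A ⊗[R] A ≃ₗ[R] A ⊗[R] A} {κ : A →ₗ[R] A}

local prefix:max "◁" => LinearMap.lTensor A
local notation "μ" => head₂₁ (LinearMap.mul' R A)
local notation "φ" => head₁₂ (Coalgebra.comul (R := R) (A := A))
local notation "ε" => head₁₀ (Coalgebra.counit (R := R) (A := A))
local notation "σ" => head₂₂ (LinearEquiv.toLinearMap b)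
local notation "σ⁻¹" => head₂₂ (LinearEquiv.toLinearMap (LinearEquiv.symm b))
local notation "τ" => head₂₂ (secondaryBraiding b)
local notation "θ" => head₂₂ (secondaryBraiding (LinearEquiv.symm b))

namespace MixedCoassoc

variable (h : MixedCoassoc b) (hb : IsMulBraiding b.toLinearMap)
include h hb

theorem secondaryBraiding_symm_mul_left (x : A ⊗[R] (A ⊗[R] (A ⊗[R] W))) :
    θ (μ x) = ◁μ (θ (◁θ x)) := by
  have hb_symm : IsMulBraiding b.symm.toLinearMap := hb.of_inverse b.comp_symm b.symm_comp
  have shift_hexagon (y : A ⊗[R] (A ⊗[R] (A ⊗[R] (A ⊗[R] W)))) :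
      ◁σ (◁(◁μ) y) = ◁μ (◁(◁σ) (◁σ y)) := by
    simpa only [lTensor_comp_apply] using
      lTensor_congr (f := σ ∘ₗ ◁μ) (g := μ ∘ₗ ◁σ ∘ₗ σ) hb.head_mul_right y
  calc θ (μ x)
    _ = ◁(◁ε) (◁σ (φ (σ⁻¹ (μ x)))) := head₂₂_secondaryBraiding b.symm _
    _ = ◁(◁ε) (◁σ (◁(◁μ) (φ (σ⁻¹ (◁σ⁻¹ x))))) := by rw [hb_symm.head_mul_left, head₁₂_lTensor]
    _ = ◁(◁ε) (◁μ (◁(◁σ) (◁σ (φ (σ⁻¹ (◁σ⁻¹ x)))))) := by rw [shift_hexagon]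
    _ = ◁(◁ε) (◁μ (◁(◁σ) (θ (◁φ (◁σ⁻¹ x))))) := by rw [h.pentagon_right]
    _ = ◁μ (θ (◁(◁(◁ε)) (◁(◁σ) (◁φ (◁σ⁻¹ x))))) := by
      simp only [head₂₂_lTensor, lTensor_square (head₂₁_lTensor _ _)]
    _ = ◁μ (θ (◁θ x)) := by rw [lTensor_head₂₂_secondaryBraiding, LinearEquiv.symm_symm]

theorem secondaryBraiding_symm_mul_right (x : A ⊗[R] (A ⊗[R] (A ⊗[R] W))) :
    θ (◁μ x) = μ (◁θ (θ x)) := by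
  have hb_symm : IsMulBraiding b.symm.toLinearMap := hb.of_inverse b.comp_symm b.symm_comp
  have shift_pentagon (y : A ⊗[R] (A ⊗[R] (A ⊗[R] W))) :
      ◁σ (◁(◁φ) (◁σ⁻¹ y)) = ◁(◁θ) (◁φ y) := by
    simpa only [lTensor_comp_apply] using
      lTensor_congr (f := σ ∘ₗ ◁φ ∘ₗ σ⁻¹) (g := ◁θ ∘ₗ φ) h.pentagon_left y
  calc θ (◁μ x)
    _ = ε (σ (◁φ (σ⁻¹ (◁μ x)))) := h.head_secondaryBraiding_symm _
    _ = ε (σ (μ (◁(◁φ) (◁σ⁻¹ (σ⁻¹ x))))) := by rw [hb_symm.head_mul_right, head₂₁_lTensor]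
    _ = ε (◁μ (σ (◁σ (◁(◁φ) (◁σ⁻¹ (σ⁻¹ x)))))) := by rw [hb.head_mul_left]
    _ = ε (◁μ (σ (◁(◁θ) (◁φ (σ⁻¹ x))))) := by rw [shift_pentagon]
    _ = μ (◁θ (ε (σ (◁φ (σ⁻¹ x))))) := by simp only [head₂₂_lTensor, head₁₀_lTensor]
    _ = μ (◁θ (θ x)) := by rw [← h.head_secondaryBraiding_symm]

theorem isMulBraiding_secondaryBraiding_symm : IsMulBraiding (secondaryBraiding b.symm) :=
  .of_head (h.secondaryBraiding_symm_mul_left hb) (h.secondaryBraiding_symm_mul_right hb)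

end MixedCoassoc

/-- The left antipode axiom `m(κ ⊗ id)φ = 1ε`. -/
def IsLeftAntipode (κ : A →ₗ[R] A) : Prop :=
  LinearMap.mul' R A ∘ₗ κ.rTensor A ∘ₗ Coalgebra.comul = Algebra.linearMap R A ∘ₗ Coalgebra.counit

namespace IsLeftAntipode

variable (h : IsLeftAntipode (R := R) κ)
include h

theorem head_apply (x : A ⊗[R] W) : μ (κ.rTensor (A ⊗[R] W) (φ x)) = (1 : A) ⊗ₜ ε x := by
  refine ext_tail (f := μ ∘ₗ κ.rTensor (A ⊗[R] W) ∘ₗ φ) (g := TensorProduct.mk R A W 1 ∘ₗ ε)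
    (fun w a => ?_) x
  calc μ (κ.rTensor (A ⊗[R] W) (φ (tail A w a)))
    _ = tail A w (LinearMap.mul' R A (κ.rTensor A (Coalgebra.comul a))) := by
      rw [head₁₂_tail, rTensor_lTensor_apply, head₂₁_tail]
    _ = tail A w (Algebra.linearMap R A (Coalgebra.counit a)) :=
      congrArg _ (LinearMap.congr_fun h a)
    _ = (1 : A) ⊗ₜ ε (tail A w a) := by
      rw [head₁₀_tail, tail_apply, Algebra.linearMap_apply, Algebra.algebraMap_eq_smul_one,
        smul_tmul, toSpanSingleton_apply]

theorem mul_antipode_mul_comul (x : A ⊗[R] (A ⊗[R] W)) :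
    μ (κ.rTensor (A ⊗[R] W) (◁μ (φ x))) = ε x := by
  rw [rTensor_lTensor_apply, ← head_mul_mul, h.head_apply, head_mul_one_tmul]

theorem eq_of_mul_lTensor_comul {f g : A ⊗[R] V →ₗ[R] A ⊗[R] W}
    (hfg : ∀ x, μ (◁f (φ x)) = μ (◁g (φ x))) (x : A ⊗[R] V) : f x = g x := by
  have recover (k : A ⊗[R] V →ₗ[R] A ⊗[R] W) :
      μ (κ.rTensor (A ⊗[R] W) (◁(μ ∘ₗ ◁k ∘ₗ φ) (φ x))) = k x := by
    simp only [lTensor_comp_apply]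
    rw [← head_comul_comul, ← head₁₂_lTensor, h.mul_antipode_mul_comul, head₁₀_lTensor,
      head_counit_comul]
  rw [← recover f, ← recover g, lTensor_congr (g := μ ∘ₗ ◁g ∘ₗ φ) hfg]

end IsLeftAntipode

/-- A braided Hopf algebra: an algebra and coalgebra `A` with a braiding `b`, compatible with both
structures, for which the comultiplication is multiplicative, and a left antipode `κ`. -/
structure IsBraidedHopf (b : A ⊗[R] A ≃ₗ[R] A ⊗[R] A) (κ : A →ₗ[R] A) : Prop extends
    IsMulBraiding b.toLinearMap where
  mixed_coassoc : MixedCoassoc b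
  comul_mul : Coalgebra.comul ∘ₗ LinearMap.mul' R A =
    (μ ∘ₗ ◁(◁(LinearMap.mul' R A))) ∘ₗ ◁(head₂₂ b.toLinearMap) ∘ₗ φ ∘ₗ ◁Coalgebra.comul
  antipode_left : IsLeftAntipode (R := R) κ

namespace IsBraidedHopf

variable (h : IsBraidedHopf b κ)
include h

theorem head_comul_mul (x : A ⊗[R] (A ⊗[R] W)) : φ (μ x) = μ (◁(◁μ) (◁σ (φ (◁φ x)))) := by
  refine ext_lTensor_tail (f := φ ∘ₗ μ) (g := μ ∘ₗ ◁(◁μ) ∘ₗ ◁σ ∘ₗ φ ∘ₗ ◁φ) (fun w t => ?_) x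
  have h_t := congrArg ◁(tail A w) (LinearMap.congr_fun h.comul_mul t)
  simpa only [comp_apply, head₂₁_tail, head₁₂_tail, head₁₂_lTensor, head₂₁_lTensor,
    lTensor_square (head₁₂_tail w _), lTensor_square (head₂₂_lTensor (tail A w) _),
    lTensor_square (lTensor_square (head₂₁_tail w _))] using h_t

theorem lTensor_counit_mul_braid_comul (x : A ⊗[R] (A ⊗[R] W)) :
    ◁ε (◁μ (σ (◁φ x))) = ε x := by
  refine h.antipode_left.eq_of_mul_lTensor_comul (f := ◁ε ∘ₗ ◁μ ∘ₗ σ ∘ₗ ◁φ) (g := ε)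
    (fun y => ?_) x
  calc μ (◁(◁ε ∘ₗ ◁μ ∘ₗ σ ∘ₗ ◁φ) (φ y))
    _ = ◁ε (μ (◁(◁μ) (◁σ (φ (◁φ y))))) := by
      simp only [lTensor_comp_apply, head₁₂_lTensor, head₂₁_lTensor]
    _ = ◁ε (φ (μ y)) := by rw [h.head_comul_mul]
    _ = μ (◁ε (φ y)) := by simp only [lTensor_head_counit_comul]

theorem counit_mul_secondaryBraiding_symm_braid (x : A ⊗[R] (A ⊗[R] W)) :
    ε (μ (θ (σ x))) = ε (ε x) := by
  rw [h.mixed_coassoc.head_secondaryBraiding_symm_braid, ← head₁₀_lTensor, ← head₁₀_lTensor,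
    h.lTensor_counit_mul_braid_comul]

theorem lTensor_counit_mul_comul_secondaryBraiding_symm (x : A ⊗[R] (A ⊗[R] W)) :
    ◁ε (◁μ (φ (θ x))) = ◁ε (σ⁻¹ x) := by
  have shift_counit_mul (y : A ⊗[R] (A ⊗[R] (A ⊗[R] W))) :
      ◁ε (◁μ (◁θ (◁σ y))) = ◁ε (◁ε y) := by
    simpa only [lTensor_comp_apply] using lTensor_congr (f := ε ∘ₗ μ ∘ₗ θ ∘ₗ σ) (g := ε ∘ₗ ε)
      h.counit_mul_secondaryBraiding_symm_braid y
  calc ◁ε (◁μ (φ (θ x)))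
    _ = ◁ε (◁μ (φ (θ (σ (σ⁻¹ x))))) := by rw [head₂₂_apply_head₂₂ b.comp_symm]
    _ = ◁ε (◁ε (φ (σ⁻¹ x))) := by rw [head_comul_secondaryBraiding_symm_braid, shift_counit_mul]
    _ = ◁ε (σ⁻¹ x) := by rw [lTensor_head_counit_comul]

theorem secondaryBraiding_symm_injective :
    Function.Injective (θ : A ⊗[R] (A ⊗[R] W) →ₗ[R] A ⊗[R] (A ⊗[R] W)) := by
  refine Function.LeftInverse.injective (g := fun y => σ (◁ε (◁μ (φ (◁φ y))))) fun x => ?_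
  calc σ (◁ε (◁μ (φ (◁φ (θ x)))))
    _ = σ (◁ε (◁μ (φ (θ (σ (◁φ (σ⁻¹ x))))))) := by
      rw [← h.mixed_coassoc.lTensor_comul_secondaryBraiding_symm_braid,
        head₂₂_apply_head₂₂ b.comp_symm]
    _ = σ (◁ε (◁φ (σ⁻¹ x))) := by
      rw [h.lTensor_counit_mul_comul_secondaryBraiding_symm, head₂₂_apply_head₂₂ b.symm_comp]
    _ = x := by
      rw [lTensor_leftInverse head_counit_comul, head₂₂_apply_head₂₂ b.comp_symm]

theorem head_secondaryBraiding (x : A ⊗[R] (A ⊗[R] W)) :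
    τ x = ◁(◁ε) (◁(◁μ) (◁φ (σ (◁φ x)))) := by
  have shift_counit_symm (y : A ⊗[R] (A ⊗[R] (A ⊗[R] W))) :
      ◁(◁ε) (◁(◁μ) (◁φ (◁θ y))) = ◁(◁ε) (◁σ⁻¹ y) := by
    simpa only [lTensor_comp_apply] using
      lTensor_congr (f := ◁ε ∘ₗ ◁μ ∘ₗ φ ∘ₗ θ) (g := ◁ε ∘ₗ σ⁻¹)
        h.lTensor_counit_mul_comul_secondaryBraiding_symm y
  rw [head₂₂_secondaryBraiding, ← shift_counit_symm, ← h.mixed_coassoc.pentagon_left,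
    head₂₂_apply_head₂₂ b.symm_comp]

theorem secondaryBraiding_symm_apply_secondaryBraiding (x : A ⊗[R] (A ⊗[R] W)) : θ (τ x) = x := by
  have shift_counit_mul (y : A ⊗[R] (A ⊗[R] (A ⊗[R] W))) :
      ◁(◁ε) (◁(◁μ) (◁σ (◁(◁φ) y))) = ◁ε y := by
    simpa only [lTensor_comp_apply] using
      lTensor_congr (f := ◁ε ∘ₗ ◁μ ∘ₗ σ ∘ₗ ◁φ) (g := ε) h.lTensor_counit_mul_braid_comul y
  calc θ (τ x)
    _ = ◁(◁ε) (◁(◁μ) (θ (◁φ (σ (◁φ x))))) := by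
      simp only [h.head_secondaryBraiding, head₂₂_lTensor]
    _ = ◁(◁ε) (◁(◁μ) (◁σ (φ (◁φ x)))) := by
      rw [← h.mixed_coassoc.pentagon_right, head₂₂_apply_head₂₂ b.symm_comp]
    _ = ◁ε (φ x) := by rw [head₁₂_lTensor, shift_counit_mul]
    _ = x := lTensor_head_counit_comul x

theorem secondaryBraiding_apply_secondaryBraiding_symm (x : A ⊗[R] (A ⊗[R] W)) : τ (θ x) = x :=
  h.secondaryBraiding_symm_injective (h.secondaryBraiding_symm_apply_secondaryBraiding _)

end IsBraidedHopf

end BraidedHopf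

theorem bqg_tau_mul_general {R A : Type*} [CommSemiring R] [Semiring A] [Algebra R A]
    [Coalgebra R A] {b : A ⊗[R] A ≃ₗ[R] A ⊗[R] A} {κ : A →ₗ[R] A} (h : IsBraidedHopf b κ) :
    IsMulBraiding (secondaryBraiding b) :=
  (h.mixed_coassoc.isMulBraiding_secondaryBraiding_symm h.toIsMulBraiding).of_inverse
    (comp_eq_id_of_head₂₂ h.secondaryBraiding_symm_apply_secondaryBraiding)
    (comp_eq_id_of_head₂₂ h.secondaryBraiding_apply_secondaryBraiding_symm)

namespace BQG

variable {A : Type*} [Ring A] [Algebra ℂ A] (G : BQG A)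

/-- The coalgebra underlying a braided quantum group. -/
abbrev toCoalgebra : Coalgebra ℂ A where
  comul := G.φ
  counit := G.ε
  coassoc := G.coassoc
  rTensor_counit_comp_comul :=
    (LinearEquiv.eq_toLinearMap_symm_comp (e₁₂ := TensorProduct.lid ℂ A) _ _).2 G.counit_left
  lTensor_counit_comp_comul :=
    (LinearEquiv.eq_toLinearMap_symm_comp (e₁₂ := TensorProduct.rid ℂ A) _ _).2 G.counit_right

/-- The braiding of a braided quantum group as a linear equivalence. -/
def braiding : A ⊗[ℂ] A ≃ₗ[ℂ] A ⊗[ℂ] A :=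
  LinearEquiv.ofLinearMap G.σ G.σ' G.σ_comp G.comp_σ

theorem isBraidedHopf : letI := G.toCoalgebra; IsBraidedHopf G.braiding G.κ :=
  letI := G.toCoalgebra
  { comp_mul_left := G.braid_mul_left
    comp_mul_right := G.braid_mul_right
    mixed_coassoc := G.mixed_coassoc
    comul_mul := G.comul_mul
    antipode_left := G.antipode_left }

end BQG

/-- Hexagon-type multiplication relations for the secondary braiding:
`τ(m⊗id) = (id⊗m)(τ⊗id)(id⊗τ)` and `τ(id⊗m) = (m⊗id)(id⊗τ)(τ⊗id)`. -/
theorem bqg_tau_mul {A : Type*} [Ring A] [Algebra ℂ A] (G : BQG A) :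
    G.τ ∘ₗ m12 = m23 ∘ₗ op12 G.τ ∘ₗ op23 G.τ ∧
    G.τ ∘ₗ m23 = m12 ∘ₗ op23 G.τ ∘ₗ op12 G.τ :=
  letI := G.toCoalgebra
  have h := bqg_tau_mul_general G.isBraidedHopf
  ⟨h.comp_mul_left, h.comp_mul_right⟩
end
end
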